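/- arXiv:1810.02667 — 2 statements merged into one kernel-verified Lean document; each statement's English description precedes it below -/
import Mathlib

section
/- Let u, v, w ∈ [1,γ]. Suppose p, q, r, s ∈ [1,γ] are least upper bounds in ([1,γ],≤) of {u,v}, {v,w}, {u,w}, and {u,v,w} respectively, and define a, b, c, d, e, f, g, h, i ∈ W by ua = vb = p, vc = wd = q, ue = wf = r, and pg = qh = ri = s. Then ag = ei and ag is a least upper bound of {a,e} in ([1,γ],≤); bg = ch and bg is a least upper bound of {b,c} in ([1,γ],≤); and dh = fi and dh is a least upper bound of {d,f} in ([1,γ],≤). -/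
/-!
The statement follows from the existence of meets in `[1, γ]`. If `x` is an upper bound of
`u⁻¹ p` and `u⁻¹ r` and `y` is the meet of `x` and `u⁻¹ s`, then `u y ≤ s ≤ γ` and both `p ≤ u y` and
`r ≤ u y`, so `s ≤ u y` because `s` is the join of `u, v, w`; hence `y = u⁻¹ s ≤ x`
(`inv_mul_isIntervalLUB`). The three claims are this fact applied at `u`, `v` and `w`.

That `[1, γ]` has meets is proved here without classification, in the geometric representation `V`
of `W`, whose Tits form `⟨ , ⟩` is positive definite because `W` is finite. Write `γ` as the product
of a word `L` and let `E` be the bilinear form with `E x y + E y x = 2 ⟨x, y⟩` which is upper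
triangular on the simple roots in the order of `L`. Call a subspace `X` noncrossing, with element `g`,
if `1 - g` maps `V` to `X` and `E ((1 - g) v, m) = 2 ⟨v, m⟩` for `m ∈ X` (`IsNC`). Then `X` is the
image of `1 - g`, it is spanned by roots, and removing a root of `X` (`IsNC.cut`) lowers the dimension
by one; consequently reflection length is the dimension of `X` and the reflection order on `[1, γ]` is
inclusion of noncrossing subspaces (`IsNC.rlen_eq`, `IsNC.rle_of_le`, `IsNC.exists_of_rle`).

The main step is `meetAt`: if `P` lies in the cones spanned by the positive roots of two noncrossing
subspaces `X` and `Z`, then `P` lies in a noncrossing subspace contained in both. Let `i` be the first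
letter of `L`. If `αᵢ` lies in both `X` and `Z`, then each cone is the sum of the ray of `αᵢ` and the
cone of the section by `{vᵢ = 0}` (`cone_split`), and one concludes by induction on the length of `L`.
Otherwise everything can be rotated by `sᵢ`, the word becoming the cyclic shift of `L`, and the rotated
point lies again in the two cones. Since a Coxeter element fixes no nonzero vector, `P ≠ 0` cannot
remain positive under all rotations, so the first case eventually occurs. Applying `meetAt` to a
generic point `P` of the cone of `X ∩ Z` yields the meet (`exists_meet_word`).
-/

variable {B : Type*} {W : Type*} [Group W] {M : CoxeterMatrix B}

/-- The reflection length of `w`: the least `k` such that `w` is a product of `k`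
reflections (conjugates of simple reflections). -/
noncomputable def rlen (cs : CoxeterSystem M W) (w : W) : ℕ :=
  sInf {k | ∃ l : List W, (∀ t ∈ l, cs.IsReflection t) ∧ l.length = k ∧ l.prod = w}

/-- The reflection (absolute) order on `W`: `u ≤ w` iff `ℓ(w) = ℓ(u) + ℓ(u⁻¹w)`. -/
def rle (cs : CoxeterSystem M W) (u w : W) : Prop :=
  rlen cs w = rlen cs u + rlen cs (u⁻¹ * w)

/-- A Coxeter element: a conjugate of a product of all the simple reflections,
each occurring exactly once, in some order. -/
def IsCoxeterElement [Fintype B] (cs : CoxeterSystem M W) (γ : W) : Prop :=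
  ∃ (v : W) (l : List B), l.Nodup ∧ (∀ i : B, i ∈ l) ∧ γ = v * cs.wordProd l * v⁻¹

/-- `p` is a least upper bound of the set `s` within the interval `[1,γ]`
under the reflection order. -/
def IsIntervalLUB (cs : CoxeterSystem M W) (γ : W) (s : Set W) (p : W) : Prop :=
  rle cs p γ ∧ (∀ x ∈ s, rle cs x p) ∧
    ∀ r, rle cs r γ → (∀ x ∈ s, rle cs x r) → rle cs p r

set_option linter.unusedSimpArgs false
set_option linter.unusedSectionVars false

namespace NCLattice

open Real

/-! ### The geometric representation -/

section Geometric

variable [Fintype B] [DecidableEq B]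

/-- The Tits form `⟨αᵢ, αⱼ⟩ = -cos (π / mᵢⱼ)` on `B → ℝ`. Since `π / 0 = 0` by convention, the entry
`mᵢⱼ = 0` (which encodes `∞`) gives the usual value `-1`. -/
noncomputable def form (M : CoxeterMatrix B) : LinearMap.BilinForm ℝ (B → ℝ) :=
  Matrix.toBilin' (Matrix.of fun i j => -cos (π / (M i j : ℝ)))

/-- The simple root `αᵢ`. -/
def sroot (i : B) : B → ℝ := Pi.single i 1

lemma form_sroot (i j : B) : form M (sroot i) (sroot j) = -cos (π / (M i j : ℝ)) := by
  simp [form, sroot, Matrix.toBilin'_single]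

lemma form_sroot_self (i : B) : form M (sroot i) (sroot i) = 1 := by
  simp [form_sroot]

lemma form_comm (x y : B → ℝ) : form M x y = form M y x := by
  simp only [form, Matrix.toBilin'_apply, Matrix.of_apply]
  rw [Finset.sum_comm]
  refine Finset.sum_congr rfl fun i _ => Finset.sum_congr rfl fun j _ => ?_
  rw [M.symmetric j i]; ring

/-- The reflection in the simple root `αᵢ`. -/
noncomputable def srefl (M : CoxeterMatrix B) (i : B) : Module.End ℝ (B → ℝ) :=
  LinearMap.id - ((2 : ℝ) • (form M).flip (sroot i)).smulRight (sroot i)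

lemma srefl_apply (i : B) (x : B → ℝ) :
    srefl M i x = x - (2 * form M x (sroot i)) • sroot i := by
  simp [srefl]

lemma srefl_sroot_self (i : B) : srefl M i (sroot i) = - sroot i := by
  rw [srefl_apply, form_sroot_self]; module

lemma srefl_srefl (i : B) (x : B → ℝ) : srefl M i (srefl M i x) = x := by
  rw [srefl_apply, srefl_apply]
  simp only [map_sub, map_smul, LinearMap.sub_apply, LinearMap.smul_apply, form_sroot_self,
    smul_eq_mul]
  module

lemma form_srefl (i : B) (x y : B → ℝ) : form M (srefl M i x) (srefl M i y) = form M x y := by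
  rw [srefl_apply, srefl_apply]
  simp only [map_sub, map_smul, LinearMap.sub_apply, LinearMap.smul_apply, form_sroot_self,
    smul_eq_mul, form_comm (sroot i) y]
  ring

/-- The Chebyshev-type sequence `sin (k θ) / sin θ`, defined by its recursion so that it also
makes sense for `θ = 0`. -/
noncomputable def cheb (θ : ℝ) : ℕ → ℝ
  | 0 => 0
  | 1 => 1
  | k + 2 => 2 * cos θ * cheb θ (k + 1) - cheb θ k

lemma sin_mul_cheb (θ : ℝ) : ∀ k : ℕ, sin θ * cheb θ k = sin (k * θ)
  | 0 => by simp [cheb]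
  | 1 => by simp [cheb]
  | k + 2 => by
    have h1 := sin_mul_cheb θ (k + 1)
    have h0 := sin_mul_cheb θ k
    rw [cheb]
    have e2 : ((k + 2 : ℕ) : ℝ) * θ = ((k + 1 : ℕ) : ℝ) * θ + θ := by push_cast; ring
    have e0 : (k : ℝ) * θ = ((k + 1 : ℕ) : ℝ) * θ - θ := by push_cast; ring
    rw [e0, sin_sub] at h0
    rw [e2, sin_add]
    linear_combination 2 * cos θ * h1 - h0

lemma cheb_zero_angle : ∀ k : ℕ, cheb 0 k = k
  | 0 => by simp [cheb]
  | 1 => by simp [cheb]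
  | k + 2 => by
    rw [cheb, cheb_zero_angle (k + 1), cheb_zero_angle k]; push_cast; simp; ring

lemma sin_pos_of_two_le {m : ℕ} (hm : 2 ≤ m) : 0 < sin (π / m) := by
  have : (2 : ℝ) ≤ m := by exact_mod_cast hm
  apply sin_pos_of_pos_of_lt_pi
  · have := pi_pos; positivity
  · rw [div_lt_iff₀ (by linarith)]; nlinarith [pi_pos]

lemma cheb_nonneg {m k : ℕ} (hm : m ≠ 1) (hk : m = 0 ∨ k ≤ m) : 0 ≤ cheb (π / m) k := by
  rcases Nat.eq_zero_or_pos m with rfl | hpos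
  · simp [cheb_zero_angle]
  · have hk' : k ≤ m := by omega
    have hs := sin_pos_of_two_le (m := m) (by omega)
    have h : 0 ≤ sin (k * (π / m)) := by
      apply sin_nonneg_of_nonneg_of_le_pi
      · have := pi_pos; positivity
      · have h2 : (k : ℝ) ≤ m := by exact_mod_cast hk'
        have h3 : (0 : ℝ) < m := by exact_mod_cast hpos
        rw [← mul_div_assoc, div_le_iff₀ h3]
        nlinarith [pi_pos]
    rw [← sin_mul_cheb] at h
    exact nonneg_of_mul_nonneg_right h hs

/-- `(sᵢ sⱼ)ᵏ αᵢ` in terms of the Chebyshev sequence. -/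
lemma srefl_mul_pow_apply (i j : B) (k : ℕ) :
    ((srefl M i * srefl M j) ^ k) (sroot i) =
      cheb (π / (M i j : ℝ)) (2 * k + 1) • sroot i + cheb (π / (M i j : ℝ)) (2 * k) • sroot j := by
  induction k with
  | zero => simp [cheb]
  | succ k ih =>
    rw [pow_succ', Module.End.mul_apply, ih, Module.End.mul_apply]
    have e1 : 2 * (k + 1) + 1 = (2 * k + 1) + 2 := by ring
    have e2 : 2 * (k + 1) = 2 * k + 2 := by ring
    rw [e1, e2, cheb, cheb]
    simp only [srefl_apply, map_add, map_smul, map_sub, LinearMap.add_apply, LinearMap.smul_apply,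
      LinearMap.sub_apply, form_sroot_self, smul_eq_mul, form_sroot, M.symmetric j i]
    module

lemma cheb_period {m : ℕ} (hm : 2 ≤ m) :
    cheb (π / m) (2 * m + 1) = 1 ∧ cheb (π / m) (2 * m) = 0 := by
  have hs := sin_pos_of_two_le hm
  have h1 := sin_mul_cheb (π / m) (2 * m + 1)
  have h2 := sin_mul_cheb (π / m) (2 * m)
  have h3 : (m : ℝ) ≠ 0 := by positivity
  have e2 : ((2 * m : ℕ) : ℝ) * (π / m) = 2 * π := by push_cast; field_simp
  have e1 : ((2 * m + 1 : ℕ) : ℝ) * (π / m) = π / m + 2 * π := by push_cast; field_simp; ring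
  rw [e1, sin_add_two_pi] at h1
  rw [e2, sin_two_pi] at h2
  constructor
  · apply mul_left_cancel₀ hs.ne'; rw [h1, mul_one]
  · apply mul_left_cancel₀ hs.ne'; rw [h2, mul_zero]

lemma srefl_mul_pow_fix {i j : B} (hm : 2 ≤ M i j) :
    ((srefl M i * srefl M j) ^ (M i j)) (sroot i) = sroot i := by
  rw [srefl_mul_pow_apply, (cheb_period hm).1, (cheb_period hm).2]; simp

lemma srefl_mul_self (i : B) : srefl M i * srefl M i = 1 := by
  refine LinearMap.ext fun x => ?_
  rw [Module.End.mul_apply, srefl_srefl, Module.End.one_apply]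

lemma srefl_braid : M.IsLiftable (srefl M) := by
  intro i j
  rcases eq_or_ne i j with rfl | hij
  · rw [srefl_mul_self, one_pow]
  rcases Nat.eq_zero_or_pos (M i j) with h0 | hpos
  · rw [h0, pow_zero]
  have hm : 2 ≤ M i j := by have := M.off_diagonal i j hij; omega
  set m := M i j with hmdef
  have hi := srefl_mul_pow_fix (M := M) hm
  have hj : ((srefl M i * srefl M j) ^ m) (sroot j) = sroot j := by
    have h := srefl_mul_pow_fix (M := M) (i := j) (j := i) (by rw [M.symmetric]; exact hm)
    rw [M.symmetric j i] at h
    have hinv : (srefl M i * srefl M j) ^ m * (srefl M j * srefl M i) ^ m = 1 := by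
      rw [← (show Commute (srefl M i * srefl M j) (srefl M j * srefl M i) from ?_).mul_pow]
      · rw [mul_assoc, ← mul_assoc (srefl M j), srefl_mul_self, one_mul, srefl_mul_self, one_pow]
      · show _ * _ = _ * _
        rw [mul_assoc, ← mul_assoc (srefl M j), srefl_mul_self, one_mul, srefl_mul_self,
          mul_assoc, ← mul_assoc (srefl M i), srefl_mul_self, one_mul, srefl_mul_self]
    have := congrArg (fun f : Module.End ℝ (B → ℝ) => f (sroot j)) hinv
    simp only [Module.End.mul_apply, Module.End.one_apply] at this
    rwa [h] at this
  have horth : ∀ z : B → ℝ, form M z (sroot i) = 0 → form M z (sroot j) = 0 →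
      ∀ k, ((srefl M i * srefl M j) ^ k) z = z := by
    intro z h1 h2 k
    induction k with
    | zero => simp
    | succ k ih => 
      rw [pow_succ', Module.End.mul_apply, ih, Module.End.mul_apply, srefl_apply j, h2]
      simp [srefl_apply, h1]
  have hs := sin_pos_of_two_le hm
  have hdet : sin (π / m) ^ 2 = 1 - cos (π / m) ^ 2 := sin_sq _
  have hdet0 : (1 - cos (π / m) ^ 2) ≠ 0 := by rw [← hdet]; positivity
  refine LinearMap.ext fun z => ?_
  -- subtract from `z` its orthogonal projection to the plane spanned by the two simple roots
  set c := cos (π / m) with hc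
  set p := form M z (sroot i)
  set q := form M z (sroot j)
  set a := (p + c * q) / (1 - c ^ 2) with ha
  set b := (q + c * p) / (1 - c ^ 2) with hb
  have hfij : form M (sroot i) (sroot j) = -c := form_sroot i j
  have hfji : form M (sroot j) (sroot i) = -c := by rw [form_comm, hfij]
  have hz := horth (z - a • sroot i - b • sroot j)
    (by
      simp only [map_sub, map_smul, LinearMap.sub_apply, LinearMap.smul_apply, form_sroot_self,
        hfji, smul_eq_mul]
      rw [ha, hb]; field_simp; ring)
    (by
      simp only [map_sub, map_smul, LinearMap.sub_apply, LinearMap.smul_apply, form_sroot_self,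
        hfij, smul_eq_mul]
      rw [ha, hb]; field_simp; ring) m
  simp only [map_sub, map_smul] at hz
  rw [hi, hj] at hz
  have := sub_left_injective (sub_left_injective hz)
  simpa using this

/-- The geometric representation of `W` on `B → ℝ`. -/
noncomputable def rep (cs : CoxeterSystem M W) : W →* Module.End ℝ (B → ℝ) :=
  cs.lift ⟨srefl M, srefl_braid⟩

variable (cs : CoxeterSystem M W)

lemma rep_simple (i : B) : rep cs (cs.simple i) = srefl M i := cs.lift_apply_simple _ i

lemma rep_mul_apply (u v : W) (x : B → ℝ) : rep cs (u * v) x = rep cs u (rep cs v x) := by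
  rw [map_mul, Module.End.mul_apply]

lemma rep_inv_apply (u : W) (x : B → ℝ) : rep cs u⁻¹ (rep cs u x) = x := by
  rw [← rep_mul_apply, inv_mul_cancel, map_one, Module.End.one_apply]

lemma rep_apply_inv (u : W) (x : B → ℝ) : rep cs u (rep cs u⁻¹ x) = x := by
  rw [← rep_mul_apply, mul_inv_cancel, map_one, Module.End.one_apply]

lemma form_rep (w : W) (x y : B → ℝ) : form M (rep cs w x) (rep cs w y) = form M x y := by
  induction w using cs.simple_induction_left generalizing x y with
  | one => simp
  | mul_simple_left w i ih => rw [rep_mul_apply, rep_mul_apply, rep_simple, form_srefl, ih]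

lemma sroot_nonneg (i : B) : 0 ≤ sroot i := by
  intro j; by_cases h : j = i
  · subst h; simp [sroot]
  · simp [sroot, h]

/-- The action of an alternating word ending in `j` on `αᵢ`: the result is a combination of the two
simple roots with consecutive Chebyshev coefficients. -/
lemma rep_alternating_apply (i j : B) (k : ℕ) :
    rep cs (cs.wordProd (CoxeterSystem.alternatingWord i j k)) (sroot i) =
      if Even k then cheb (π / (M i j : ℝ)) (k + 1) • sroot i + cheb (π / (M i j : ℝ)) k • sroot j
      else cheb (π / (M i j : ℝ)) k • sroot i + cheb (π / (M i j : ℝ)) (k + 1) • sroot j := by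
  induction k with
  | zero => simp [CoxeterSystem.alternatingWord, cheb]
  | succ k ih =>
    rw [CoxeterSystem.alternatingWord_succ', cs.wordProd_cons, rep_mul_apply, ih, rep_simple]
    by_cases hk : Even k
    · have hk1 : ¬ Even (k + 1) := by simpa [Nat.even_add_one] using hk
      rw [if_pos hk, if_pos hk, if_neg hk1, cheb]
      simp only [srefl_apply, map_add, map_smul, LinearMap.add_apply, LinearMap.smul_apply,
        form_sroot_self, smul_eq_mul, form_sroot, M.symmetric j i]
      module
    · have hk1 : Even (k + 1) := by simpa [Nat.even_add_one] using hk
      rw [if_neg hk, if_neg hk, if_pos hk1, cheb]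
      simp only [srefl_apply, map_add, map_smul, LinearMap.add_apply, LinearMap.smul_apply,
        form_sroot_self, smul_eq_mul, form_sroot, M.symmetric j i]
      module

/-- If `w sᵢ` is longer than `w`, then `w αᵢ` is a nonnegative vector. The proof splits off a
maximal alternating word in `i` and a right descent `j` of `w`, and settles the remaining dihedral
part by the explicit formula `rep_alternating_apply`. -/
theorem rep_sroot_nonneg (w : W) (i : B) (h : cs.length w < cs.length (w * cs.simple i)) :
    0 ≤ rep cs w (sroot i) := by
  induction hn : cs.length w using Nat.strong_induction_on generalizing w i with
  | _ n ih =>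
  subst hn
  by_cases hw : w = 1
  · subst hw; simpa using sroot_nonneg i
  obtain ⟨j, hj⟩ := cs.exists_rightDescent_of_ne_one hw
  have hij : i ≠ j := by
    rintro rfl
    exact absurd hj (by unfold CoxeterSystem.IsRightDescent; omega)
  let P : ℕ → Prop := fun k => ∃ v,
    w = v * cs.wordProd (CoxeterSystem.alternatingWord i j k) ∧ cs.length v + k = cs.length w
  have hP1 : P 1 := by
    refine ⟨w * cs.simple j, ?_, ?_⟩
    · simp [CoxeterSystem.alternatingWord]
    · exact cs.isRightDescent_iff.1 hj
  obtain ⟨k, hk1, ⟨v, hv, hvl⟩, hknot⟩ : ∃ k, 1 ≤ k ∧ P k ∧ ¬ P (k + 1) := by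
    by_contra hcon
    push Not at hcon
    have hall : ∀ k, 1 ≤ k → P k := by
      intro k hk
      induction k, hk using Nat.le_induction with
      | base => exact hP1
      | succ k hk ihk => exact hcon k hk ihk
    obtain ⟨v, -, hv⟩ := hall (cs.length w + 1) (by omega)
    omega
  obtain ⟨k, rfl⟩ : ∃ k', k = k' + 1 := ⟨k - 1, by omega⟩
  have hx : ¬ cs.IsRightDescent v (if Even (k + 1) then j else i) := by
    intro hd
    apply hknot
    refine ⟨v * cs.simple (if Even (k + 1) then j else i), ?_, ?_⟩
    · rw [CoxeterSystem.alternatingWord_succ', cs.wordProd_cons, ← mul_assoc,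
        cs.simple_mul_simple_cancel_right]
      exact hv
    · have := cs.isRightDescent_iff.1 hd
      omega
  have hy : ¬ cs.IsRightDescent v (if Even k then j else i) := by
    intro hd
    have hd' := cs.isRightDescent_iff.1 hd
    rw [CoxeterSystem.alternatingWord_succ', cs.wordProd_cons, ← mul_assoc] at hv
    have h1 := cs.length_mul_le (v * cs.simple (if Even k then j else i))
      (cs.wordProd (CoxeterSystem.alternatingWord i j k))
    have h2 := cs.length_wordProd_le (CoxeterSystem.alternatingWord i j k)
    rw [CoxeterSystem.length_alternatingWord] at h2
    rw [← hv] at h1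
    omega
  have hboth : ¬ cs.IsRightDescent v i ∧ ¬ cs.IsRightDescent v j := by
    by_cases hk : Even k
    · have hk1 : ¬ Even (k + 1) := by simpa [Nat.even_add_one] using hk
      rw [if_neg hk1] at hx; rw [if_pos hk] at hy
      exact ⟨hx, hy⟩
    · have hk1 : Even (k + 1) := by simpa [Nat.even_add_one] using hk
      rw [if_pos hk1] at hx; rw [if_neg hk] at hy
      exact ⟨hy, hx⟩
  have hpi : 0 ≤ rep cs v (sroot i) := ih _ (by omega) v i
    (by have := cs.not_isRightDescent_iff.1 hboth.1; omega) rfl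
  have hpj : 0 ≤ rep cs v (sroot j) := ih _ (by omega) v j
    (by have := cs.not_isRightDescent_iff.1 hboth.2; omega) rfl
  have hlen : cs.length (cs.wordProd (CoxeterSystem.alternatingWord i j (k + 1))) = k + 1 := by
    have h1 := cs.length_mul_le v (cs.wordProd (CoxeterSystem.alternatingWord i j (k + 1)))
    have h2 := cs.length_wordProd_le (CoxeterSystem.alternatingWord i j (k + 1))
    rw [CoxeterSystem.length_alternatingWord] at h2
    rw [← hv] at h1
    omega
  have hkM : M i j = 0 ∨ k + 1 + 1 ≤ M i j := by
    by_contra hcon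
    push Not at hcon
    obtain ⟨hM, hlt⟩ := hcon
    rcases Nat.lt_or_ge (M i j) (k + 1) with hgt | hle
    · apply cs.not_isReduced_alternatingWord i j hM hgt
      rw [CoxeterSystem.IsReduced, hlen, CoxeterSystem.length_alternatingWord]
    · have hMk : M i j = k + 1 := by omega
      have hbr := cs.wordProd_braidWord_eq i j
      rw [CoxeterSystem.braidWord, CoxeterSystem.braidWord, M.symmetric j i, hMk,
        CoxeterSystem.alternatingWord_succ j i, cs.wordProd_concat] at hbr
      rw [hbr] at hv
      have hws : w * cs.simple i = v * cs.wordProd (CoxeterSystem.alternatingWord i j k) := by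
        rw [hv, ← mul_assoc, cs.simple_mul_simple_cancel_right]
      have h1 := cs.length_mul_le v (cs.wordProd (CoxeterSystem.alternatingWord i j k))
      have h2 := cs.length_wordProd_le (CoxeterSystem.alternatingWord i j k)
      rw [CoxeterSystem.length_alternatingWord] at h2
      rw [← hws] at h1
      omega
  have hM1 := M.off_diagonal i j hij
  have hc1 : 0 ≤ cheb (π / (M i j : ℝ)) (k + 1) := cheb_nonneg hM1 (by omega)
  have hc2 : 0 ≤ cheb (π / (M i j : ℝ)) (k + 1 + 1) := cheb_nonneg hM1 (by omega)
  rw [hv, rep_mul_apply, rep_alternating_apply]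
  split_ifs <;> rw [map_add, map_smul, map_smul] <;>
    exact add_nonneg (smul_nonneg (by assumption) hpi) (smul_nonneg (by assumption) hpj)

/-! ### Roots -/

/-- The roots are the images of the simple roots under `W`. -/
def IsRoot (v : B → ℝ) : Prop := ∃ w i, v = rep cs w (sroot i)

variable {cs}

lemma isRoot_sroot (i : B) : IsRoot cs (sroot i) := ⟨1, i, by simp⟩

lemma IsRoot.rep {v : B → ℝ} (hv : IsRoot cs v) (w : W) : IsRoot cs (rep cs w v) := by
  obtain ⟨u, i, rfl⟩ := hv
  exact ⟨w * u, i, by rw [rep_mul_apply]⟩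

lemma IsRoot.form_self {v : B → ℝ} (hv : IsRoot cs v) : form M v v = 1 := by
  obtain ⟨u, i, rfl⟩ := hv
  rw [form_rep, form_sroot_self]

lemma IsRoot.neg {v : B → ℝ} (hv : IsRoot cs v) : IsRoot cs (-v) := by
  obtain ⟨u, i, rfl⟩ := hv
  exact ⟨u * cs.simple i, i, by rw [rep_mul_apply, rep_simple, srefl_sroot_self, map_neg]⟩

lemma IsRoot.ne_zero {v : B → ℝ} (hv : IsRoot cs v) : v ≠ 0 := by
  rintro rfl
  simpa using hv.form_self

lemma IsRoot.nonneg_or_nonpos {v : B → ℝ} (hv : IsRoot cs v) : 0 ≤ v ∨ v ≤ 0 := by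
  obtain ⟨u, i, rfl⟩ := hv
  rcases cs.length_mul_simple u i with h | h
  · left; exact rep_sroot_nonneg cs u i (by omega)
  · right
    have := rep_sroot_nonneg cs (u * cs.simple i) i
      (by rw [cs.simple_mul_simple_cancel_right]; omega)
    rw [rep_mul_apply, rep_simple, srefl_sroot_self, map_neg] at this
    exact neg_nonneg.1 this

/-- Every root has a reflection in `W` that acts as the orthogonal reflection in the root. -/
lemma IsRoot.exists_reflection {v : B → ℝ} (hv : IsRoot cs v) :
    ∃ t, cs.IsReflection t ∧ ∀ x, NCLattice.rep cs t x = x - (2 * form M x v) • v := by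
  obtain ⟨u, i, rfl⟩ := hv
  refine ⟨u * cs.simple i * u⁻¹, ⟨u, i, rfl⟩, fun x => ?_⟩
  rw [rep_mul_apply, rep_mul_apply, rep_simple, srefl_apply, map_sub, map_smul, rep_apply_inv]
  have : form M (NCLattice.rep cs u⁻¹ x) (sroot i) = form M x (NCLattice.rep cs u (sroot i)) := by
    rw [← form_rep cs u, rep_apply_inv]
  rw [this]

lemma exists_root_of_isReflection {t : W} (ht : cs.IsReflection t) :
    ∃ v, IsRoot cs v ∧ ∀ x, rep cs t x = x - (2 * form M x v) • v := by
  obtain ⟨u, i, rfl⟩ := ht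
  refine ⟨_, ⟨u, i, rfl⟩, fun x => ?_⟩
  rw [rep_mul_apply, rep_mul_apply, rep_simple, srefl_apply, map_sub, map_smul, rep_apply_inv]
  have : form M (rep cs u⁻¹ x) (sroot i) = form M x (rep cs u (sroot i)) := by
    rw [← form_rep cs u, rep_apply_inv]
  rw [this]

lemma finite_roots [Finite W] : {v | IsRoot cs v}.Finite := by
  have : {v | IsRoot cs v} ⊆ Set.range fun p : W × B => rep cs p.1 (sroot p.2) := by
    rintro v ⟨w, i, rfl⟩; exact ⟨(w, i), rfl⟩
  exact (Set.finite_range _).subset this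

/-- An element of `W` that keeps every simple root nonnegative is trivial. -/
lemma eq_one_of_nonneg {w : W} (h : ∀ i, 0 ≤ rep cs w (sroot i)) : w = 1 := by
  by_contra hw
  obtain ⟨j, hj⟩ := cs.exists_rightDescent_of_ne_one hw
  have hj' := cs.isRightDescent_iff.1 hj
  have := rep_sroot_nonneg cs (w * cs.simple j) j
    (by rw [cs.simple_mul_simple_cancel_right]; omega)
  rw [rep_mul_apply, rep_simple, srefl_sroot_self, map_neg] at this
  have h0 : rep cs w (sroot j) = 0 := le_antisymm (neg_nonneg.1 this) (h j)
  exact ((isRoot_sroot (cs := cs) j).rep w).ne_zero h0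

/-! ### Positive definiteness -/

/-- For finite `W` the Tits form is positive definite: it is obtained from the `W`-average of the
standard inner product by rescaling the simple roots. -/
theorem form_self_pos [Fintype W] (cs : CoxeterSystem M W) (x : B → ℝ) (hx : x ≠ 0) : 0 < form M x x := by
  let Q : LinearMap.BilinForm ℝ (B → ℝ) :=
    ∑ w : W, (Matrix.toBilin' (1 : Matrix B B ℝ)).comp (rep cs w) (rep cs w)
  have hQ : ∀ x y, Q x y = ∑ w : W, (rep cs w x) ⬝ᵥ (rep cs w y) := by
    intro x y
    simp [Q, LinearMap.sum_apply, Matrix.toBilin'_apply', Matrix.one_mulVec]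
  have hQpos : ∀ x, x ≠ 0 → 0 < Q x x := by
    intro x hx
    rw [hQ]
    apply Finset.sum_pos'
    · intro w _
      exact Finset.sum_nonneg fun i _ => mul_self_nonneg _
    · refine ⟨1, Finset.mem_univ _, ?_⟩
      simp only [map_one, Module.End.one_apply]
      obtain ⟨i, hi⟩ := Function.ne_iff.1 hx
      exact Finset.sum_pos' (fun i _ => mul_self_nonneg _)
        ⟨i, Finset.mem_univ _, mul_self_pos.2 hi⟩
  have hQinv : ∀ u x y, Q (rep cs u x) (rep cs u y) = Q x y := by
    intro u x y
    rw [hQ, hQ]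
    simp_rw [← rep_mul_apply]
    exact Fintype.sum_equiv (Equiv.mulRight u) _ _ fun w => rfl
  have hQsymm : ∀ x y, Q x y = Q y x := by
    intro x y; rw [hQ, hQ]; exact Finset.sum_congr rfl fun w _ => dotProduct_comm _ _
  let q : B → ℝ := fun i => Q (sroot i) (sroot i)
  have hq : ∀ i, 0 < q i := fun i => hQpos _ (isRoot_sroot (cs := cs) i).ne_zero
  have hQf : ∀ i y, Q y (sroot i) = form M y (sroot i) * q i := by
    intro i y
    have h := hQinv (cs.simple i) y (sroot i)
    rw [rep_simple, srefl_sroot_self, srefl_apply] at h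
    simp only [map_sub, map_neg, map_smul, LinearMap.sub_apply, LinearMap.smul_apply,
      smul_eq_mul] at h
    show _ = _ * Q (sroot i) (sroot i)
    linarith
  have hqq : ∀ i j, form M (sroot i) (sroot j) * q i = form M (sroot i) (sroot j) * q j := by
    intro i j
    rw [← hQf, form_comm, ← hQf, hQsymm]
  have hexp : ∀ y : B → ℝ, y = ∑ i, y i • sroot i := by
    intro y
    ext k
    simp [sroot, Finset.sum_apply, Pi.single_apply]
  have hbil : ∀ (G : LinearMap.BilinForm ℝ (B → ℝ)) (y : B → ℝ),
      G y y = ∑ i, ∑ j, y i * y j * G (sroot i) (sroot j) := by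
    intro G y
    conv_lhs => rw [hexp y]
    simp only [map_sum, map_smul, LinearMap.sum_apply, LinearMap.smul_apply, smul_eq_mul,
      Finset.mul_sum]
    rw [Finset.sum_comm]
    refine Finset.sum_congr rfl fun i _ => Finset.sum_congr rfl fun j _ => ?_
    ring
  let y : B → ℝ := fun i => x i / √(q i)
  have hy : y ≠ 0 := by
    obtain ⟨i, hi⟩ := Function.ne_iff.1 hx
    exact Function.ne_iff.2 ⟨i, div_ne_zero hi (Real.sqrt_pos.2 (hq i)).ne'⟩
  have key : Q y y = form M x x := by
    rw [hbil, hbil]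
    refine Finset.sum_congr rfl fun i _ => Finset.sum_congr rfl fun j _ => ?_
    rw [hQf]
    have hi := Real.sqrt_pos.2 (hq i)
    have hj := Real.sqrt_pos.2 (hq j)
    rcases eq_or_ne (form M (sroot i) (sroot j)) 0 with h0 | h0
    · rw [h0]; simp
    · have hqe : q i = q j := mul_left_cancel₀ h0 (hqq i j)
      have hs : √(q j) * √(q j) = q j := Real.mul_self_sqrt (hq j).le
      simp only [y, hqe]
      field_simp
      rw [pow_two, hs]
      ring
  rw [← key]
  exact hQpos y hy

end Geometric

/-! ### Generic points and roots orthogonal to a fixed space -/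

section Generic

variable {V : Type*} [AddCommGroup V] [Module ℝ V]

/-- A sufficiently general positive combination of finitely many vectors lies in one of finitely
many given subspaces only if all the vectors do. -/
lemma exists_generic (S : Finset V) (H : Set (Submodule ℝ V)) (hH : H.Finite) :
    ∃ P ∈ Submodule.span NNReal (S : Set V), ∀ U ∈ H, P ∈ U → (S : Set V) ⊆ U := by
  classical
  induction S using Finset.induction_on with
  | empty => exact ⟨0, Submodule.zero_mem _, by simp⟩
  | insert v S _ ih =>
    obtain ⟨P, hP, hgen⟩ := ih
    -- each subspace not containing `v` is met by the ray `P + c v` in at most one point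
    let bad : Set NNReal := ⋃ U ∈ {U ∈ H | v ∉ U}, {c : NNReal | P + c • v ∈ U}
    have hbad : bad.Finite := by
      refine Set.Finite.biUnion (hH.subset fun U hU => hU.1) ?_
      rintro U ⟨-, hvU⟩
      refine Set.Subsingleton.finite ?_
      intro c hc d hd
      by_contra hcd
      apply hvU
      have h1 : (P + c • v) - (P + d • v) ∈ U := U.sub_mem hc hd
      have h2 : ((c : ℝ) - d) • v ∈ U := by
        have : (P + c • v) - (P + d • v) = ((c : ℝ) - d) • v := by
          rw [sub_smul]; simp only [NNReal.smul_def]; abel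
        rwa [this] at h1
      exact (U.smul_mem_iff (sub_ne_zero.2 fun h => hcd (NNReal.coe_injective h))).1 h2
    obtain ⟨c, hc⟩ := hbad.exists_notMem
    refine ⟨P + c • v, ?_, ?_⟩
    · refine Submodule.add_mem _ (Submodule.span_mono (by simp) hP)
        (Submodule.smul_mem _ _ (Submodule.subset_span (by simp)))
    · intro U hU hPU
      have hvU : v ∈ U := by
        by_contra hvU
        exact hc (Set.mem_biUnion (x := U) ⟨hU, hvU⟩ hPU)
      have hPU' : P ∈ U := by
        have := U.sub_mem hPU (U.smul_mem (c : ℝ) hvU)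
        rwa [← NNReal.smul_def, add_sub_cancel_right] at this
      have := hgen U hU hPU'
      intro x hx
      rw [Finset.coe_insert] at hx
      rcases hx with rfl | hx
      · exact hvU
      · exact this hx

end Generic

section Noncrossing

variable [Fintype B] [DecidableEq B] {cs : CoxeterSystem M W}

lemma eq_sum_sroot (y : B → ℝ) : y = ∑ i, y i • sroot i := by
  ext k
  simp [sroot, Finset.sum_apply, Pi.single_apply]

lemma rep_eq_id_iff {w : W} : (∀ v, rep cs w v = v) ↔ w = 1 := by
  constructor
  · intro h
    exact eq_one_of_nonneg fun i => by rw [h]; exact sroot_nonneg i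
  · rintro rfl v; simp

/-- The orbit of any vector contains a dominant vector. -/
lemma exists_dominant [Fintype W] (x : B → ℝ) :
    ∃ w, ∀ i, 0 ≤ form M (rep cs w x) (sroot i) := by
  obtain ⟨w, hw⟩ := Finite.exists_max fun w : W => ∑ k, rep cs w x k
  refine ⟨w, fun i => ?_⟩
  have h := hw (cs.simple i * w)
  rw [rep_mul_apply, rep_simple, srefl_apply] at h
  simp only [Pi.sub_apply, Pi.smul_apply, Finset.sum_sub_distrib, smul_eq_mul,
    ← Finset.mul_sum] at h
  have hs : ∑ k, sroot i k = (1 : ℝ) := by simp [sroot]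
  rw [hs] at h
  linarith

/-- Every nontrivial element of `W` has a root orthogonal to its fixed space: otherwise the fixed
space contains a vector orthogonal to no root, and such a vector has trivial stabilizer. -/
theorem exists_root_orthogonal [Fintype W] {g : W} (hg : g ≠ 1) :
    ∃ ρ, IsRoot cs ρ ∧ ∀ v, rep cs g v = v → form M v ρ = 0 := by
  by_contra hcon
  push Not at hcon
  let F : Submodule ℝ (B → ℝ) := LinearMap.ker (rep cs g - 1)
  have hF : ∀ v, v ∈ F ↔ rep cs g v = v := by
    intro v; simp [F, sub_eq_zero]
  obtain ⟨S, hS⟩ := (IsNoetherian.noetherian F : F.FG)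
  let H : Set (Submodule ℝ (B → ℝ)) :=
    (fun ρ => LinearMap.ker ((form M).flip ρ)) '' {ρ | IsRoot cs ρ}
  obtain ⟨x, hxS, hx⟩ := exists_generic S H (finite_roots.image _)
  have hxF : x ∈ F := by
    have : (Submodule.span NNReal (S : Set (B → ℝ))) ≤ F.restrictScalars NNReal :=
      Submodule.span_le.2 (by rw [← hS]; exact Submodule.subset_span)
    exact this hxS
  have hreg : ∀ ρ, IsRoot cs ρ → form M x ρ ≠ 0 := by
    intro ρ hρ h0
    obtain ⟨v, hv, hne⟩ := hcon ρ hρ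
    have hsub := hx _ ⟨ρ, hρ, rfl⟩ (by simpa using h0)
    have : F ≤ LinearMap.ker ((form M).flip ρ) := by
      rw [← hS]; exact Submodule.span_le.2 hsub
    exact hne (by simpa using this ((hF v).2 hv))
  obtain ⟨w, hw⟩ := exists_dominant (cs := cs) x
  have hpos : ∀ i, 0 < form M (rep cs w x) (sroot i) := by
    intro i
    refine lt_of_le_of_ne (hw i) fun h => ?_
    refine hreg (rep cs w⁻¹ (sroot i)) ((isRoot_sroot i).rep _) ?_
    rw [← form_rep cs w, rep_apply_inv, ← h]
  have hfix : rep cs (w * g * w⁻¹) (rep cs w x) = rep cs w x := by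
    rw [rep_mul_apply, rep_inv_apply, rep_mul_apply, (hF x).1 hxF]
  have h1 : w * g * w⁻¹ = 1 := by
    refine eq_one_of_nonneg (cs := cs) fun i => ?_
    rcases ((isRoot_sroot (cs := cs) i).rep (w * g * w⁻¹)).nonneg_or_nonpos with h | h
    · exact h
    · exfalso
      have e : form M (rep cs w x) (rep cs (w * g * w⁻¹) (sroot i)) =
          form M (rep cs w x) (sroot i) := by
        conv_lhs => rw [← hfix]
        rw [form_rep]
      have hle : form M (rep cs w x) (rep cs (w * g * w⁻¹) (sroot i)) ≤ 0 := by
        rw [eq_sum_sroot (rep cs (w * g * w⁻¹) (sroot i)), map_sum]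
        refine Finset.sum_nonpos fun k _ => ?_
        rw [map_smul, smul_eq_mul]
        exact mul_nonpos_of_nonpos_of_nonneg (h k) (hpos k).le
      linarith [hpos i]
  apply hg
  have := congrArg (fun z => w⁻¹ * z * w) h1
  simpa [mul_assoc] using this

/-! ### Noncrossing subspaces -/

/-- `E` is an Euler form: a bilinear form whose symmetrization is twice the Tits form. -/
def IsEuler (M : CoxeterMatrix B) (E : LinearMap.BilinForm ℝ (B → ℝ)) : Prop :=
  ∀ x y, E x y + E y x = 2 * form M x y

variable (cs) in
/-- `X` is the noncrossing subspace of `g` with respect to the Euler form `E`: the operator `1 - g`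
takes values in `X` and there satisfies `E ((1 - g) v, m) = 2 ⟨v, m⟩`. For the form
`E (x, y) = 2 ⟨(1 - γ)⁻¹ x, y⟩` attached to a Coxeter element `γ` these are the spaces
`im (1 - g)` with `g ≤ γ`. -/
structure IsNC (E : LinearMap.BilinForm ℝ (B → ℝ)) (g : W) (X : Submodule ℝ (B → ℝ)) : Prop where
  sub_mem : ∀ v, v - rep cs g v ∈ X
  eq : ∀ v, ∀ m ∈ X, E (v - rep cs g v) m = 2 * form M v m

variable {E : LinearMap.BilinForm ℝ (B → ℝ)} {g : W} {X : Submodule ℝ (B → ℝ)}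

lemma IsEuler.self (hE : IsEuler M E) (x : B → ℝ) : E x x = form M x x := by
  have := hE x x; linarith

lemma IsEuler.eq_zero [Fintype W] (hE : IsEuler M E) (cs : CoxeterSystem M W) {x : B → ℝ} (h : E x x = 0) : x = 0 := by
  by_contra hx
  have := form_self_pos cs x hx
  rw [hE.self] at h
  linarith

lemma eq_zero_of_form_self [Fintype W] (cs : CoxeterSystem M W) {x : B → ℝ} (h : form M x x = 0) : x = 0 := by
  by_contra hx
  exact (form_self_pos cs x hx).ne' h

variable (cs) in
lemma isNC_bot (E : LinearMap.BilinForm ℝ (B → ℝ)) : IsNC cs E 1 ⊥ where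
  sub_mem v := by simp
  eq v m hm := by rw [(Submodule.mem_bot ℝ).1 hm]; simp

lemma IsNC.rep_eq_iff [Fintype W] (hE : IsEuler M E) (h : IsNC cs E g X) (v : B → ℝ) :
    rep cs g v = v ↔ ∀ m ∈ X, form M v m = 0 := by
  constructor
  · intro hv m hm
    have := h.eq v m hm
    rw [hv, sub_self, map_zero, LinearMap.zero_apply] at this
    linarith
  · intro hv
    have h1 := h.eq v _ (h.sub_mem v)
    rw [hv _ (h.sub_mem v), mul_zero] at h1
    exact (sub_eq_zero.1 (hE.eq_zero cs h1)).symm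

/-- `1 - g` restricts to an automorphism of the noncrossing subspace of `g`. -/
lemma IsNC.exists_sub_eq [Fintype W] (h : IsNC cs E g X) {m : B → ℝ} (hm : m ∈ X) :
    ∃ v ∈ X, v - rep cs g v = m := by
  let f : X →ₗ[ℝ] X := ((1 - rep cs g : Module.End ℝ (B → ℝ)).restrict (p := X) (q := X)
    fun v _ => by simpa using h.sub_mem v)
  have hf : Function.Injective f := by
    rw [← LinearMap.ker_eq_bot, LinearMap.ker_eq_bot']
    intro v hv
    have hv' : (v : B → ℝ) - rep cs g v = 0 := by
      have := congrArg Subtype.val hv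
      simpa [f] using this
    have h1 := h.eq v v v.2
    rw [hv', map_zero, LinearMap.zero_apply] at h1
    exact Subtype.ext (eq_zero_of_form_self cs (by linarith))
  obtain ⟨v, hv⟩ := LinearMap.surjective_of_injective hf ⟨m, hm⟩
  refine ⟨v, v.2, ?_⟩
  have := congrArg Subtype.val hv
  simpa [f] using this

lemma IsNC.eq_range [Fintype W] (h : IsNC cs E g X) : X = LinearMap.range (1 - rep cs g) := by
  apply le_antisymm
  · intro m hm
    obtain ⟨v, -, hv⟩ := h.exists_sub_eq hm
    exact ⟨v, by simpa using hv⟩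
  · rintro _ ⟨v, rfl⟩
    simpa using h.sub_mem v

lemma IsNC.eq_one [Fintype W] (hE : IsEuler M E) (h : IsNC cs E g ⊥) : g = 1 := by
  refine rep_eq_id_iff.1 fun v => (h.rep_eq_iff hE v).2 ?_
  intro m hm
  rw [(Submodule.mem_bot ℝ).1 hm]; simp

lemma form_nondegenerate [Fintype W] (cs : CoxeterSystem M W) : (form M).Nondegenerate := by
  constructor
  · intro x hx
    exact eq_zero_of_form_self cs (hx x)
  · intro x hx
    exact eq_zero_of_form_self cs (hx x)

/-- A nonzero noncrossing subspace contains a root. -/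
lemma IsNC.exists_root [Fintype W] (hE : IsEuler M E) (h : IsNC cs E g X) (hX : X ≠ ⊥) :
    ∃ ρ ∈ X, IsRoot cs ρ := by
  have hg : g ≠ 1 := by
    rintro rfl
    apply hX
    rw [eq_bot_iff]
    intro m hm
    have := h.eq m m hm
    rw [map_one, Module.End.one_apply, sub_self, map_zero, LinearMap.zero_apply] at this
    exact eq_zero_of_form_self cs (by linarith)
  obtain ⟨ρ, hρ, horth⟩ := exists_root_orthogonal (cs := cs) hg
  refine ⟨ρ, ?_, hρ⟩
  have hrefl : (form M).IsRefl := fun x y hxy => by rw [form_comm]; exact hxy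
  rw [← LinearMap.BilinForm.orthogonal_orthogonal (form_nondegenerate cs) hrefl X]
  rw [LinearMap.BilinForm.mem_orthogonal_iff]
  intro v hv
  rw [LinearMap.BilinForm.mem_orthogonal_iff] at hv
  refine horth v ((h.rep_eq_iff hE v).2 fun m hm => ?_)
  rw [form_comm]
  exact hv m hm

/-- Removing a root from the left of a noncrossing subspace. -/
lemma IsNC.cut (hE : IsEuler M E) (h : IsNC cs E g X) {ρ : B → ℝ} (hρX : ρ ∈ X)
    {t : W} (ht : ∀ x, rep cs t x = x - (2 * form M x ρ) • ρ) (hρ : form M ρ ρ = 1) :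
    IsNC cs E (t * g) (X ⊓ LinearMap.ker (E ρ)) := by
  have key : ∀ v, v - rep cs (t * g) v =
      (v - rep cs g v) + (2 * form M (rep cs g v) ρ) • ρ := by
    intro v; rw [rep_mul_apply, ht]; module
  have hρρ : E ρ ρ = 1 := by rw [hE.self, hρ]
  constructor
  · intro v
    rw [key]
    refine ⟨X.add_mem (h.sub_mem v) (X.smul_mem _ hρX), ?_⟩
    show E ρ _ = 0
    have h1 := h.eq v ρ hρX
    have h2 := hE (v - rep cs g v) ρ
    simp only [map_add, map_smul, smul_eq_mul, hρρ]
    rw [h1, map_sub (form M), LinearMap.sub_apply] at h2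
    linarith
  · rintro v m ⟨hm, hm'⟩
    have hm' : E ρ m = 0 := hm'
    rw [key, map_add, map_smul, LinearMap.add_apply, LinearMap.smul_apply, hm', h.eq v m hm]
    simp

lemma finrank_cut (hE : IsEuler M E) {ρ : B → ℝ} (hρX : ρ ∈ X) (hρ : form M ρ ρ = 1) :
    Module.finrank ℝ (X ⊓ LinearMap.ker (E ρ) : Submodule ℝ (B → ℝ)) + 1 =
      Module.finrank ℝ X := by
  have hρρ : E ρ ρ = 1 := by rw [hE.self, hρ]
  have hρ0 : ρ ≠ 0 := by rintro rfl; simp at hρ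
  have hdisj : (X ⊓ LinearMap.ker (E ρ)) ⊓ Submodule.span ℝ {ρ} = ⊥ := by
    rw [eq_bot_iff]
    rintro x ⟨⟨-, hx⟩, hx'⟩
    obtain ⟨c, rfl⟩ := Submodule.mem_span_singleton.1 hx'
    have : E ρ (c • ρ) = 0 := hx
    rw [map_smul, hρρ, smul_eq_mul, mul_one] at this
    simp [this]
  have hsup : (X ⊓ LinearMap.ker (E ρ)) ⊔ Submodule.span ℝ {ρ} = X := by
    apply le_antisymm
    · exact sup_le inf_le_left ((Submodule.span_singleton_le_iff_mem _ _).2 hρX)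
    · intro x hx
      refine Submodule.mem_sup.2 ⟨x - E ρ x • ρ, ⟨X.sub_mem hx (X.smul_mem _ hρX), ?_⟩,
        E ρ x • ρ, Submodule.mem_span_singleton.2 ⟨_, rfl⟩, by module⟩
      show E ρ _ = 0
      simp [hρρ]
  have := Submodule.finrank_sup_add_finrank_inf_eq (X ⊓ LinearMap.ker (E ρ))
    (Submodule.span ℝ {ρ})
  rw [hdisj, hsup, finrank_bot, finrank_span_singleton hρ0] at this
  omega

/-- Adding a root on the left of a noncrossing subspace, inverse to `IsNC.cut`. -/
lemma IsNC.glue (hE : IsEuler M E) (h : IsNC cs E g X) {ρ : B → ℝ}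
    (hX : ∀ m ∈ X, E ρ m = 0) {t : W} (ht : ∀ x, rep cs t x = x - (2 * form M x ρ) • ρ)
    (hρ : form M ρ ρ = 1) : IsNC cs E (t * g) (X ⊔ Submodule.span ℝ {ρ}) := by
  have key : ∀ v, v - rep cs (t * g) v =
      (v - rep cs g v) + (2 * form M (rep cs g v) ρ) • ρ := by
    intro v; rw [rep_mul_apply, ht]; module
  have hρρ : E ρ ρ = 1 := by rw [hE.self, hρ]
  constructor
  · intro v
    rw [key]
    exact Submodule.add_mem_sup (h.sub_mem v)
      (Submodule.smul_mem _ _ (Submodule.mem_span_singleton_self ρ))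
  · intro v m hm
    obtain ⟨m', hm', y, hy, rfl⟩ := Submodule.mem_sup.1 hm
    obtain ⟨c, rfl⟩ := Submodule.mem_span_singleton.1 hy
    have h1 := h.eq v m' hm'
    have h2 := hE (v - rep cs g v) ρ
    rw [hX _ (h.sub_mem v), add_zero, map_sub (form M), LinearMap.sub_apply] at h2
    rw [key]
    simp only [map_add, map_smul, LinearMap.add_apply, LinearMap.smul_apply, smul_eq_mul, hρρ,
      hX m' hm', h1, h2]
    ring

/-- A noncrossing subspace is spanned by its roots. -/
lemma IsNC.le_span_roots [Fintype W] (hE : IsEuler M E) (h : IsNC cs E g X) :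
    X ≤ Submodule.span ℝ {ρ | IsRoot cs ρ ∧ ρ ∈ X} := by
  induction hn : Module.finrank ℝ X generalizing g X with
  | zero =>
    rw [Submodule.finrank_eq_zero.1 hn]; exact bot_le
  | succ n ih =>
    have hX : X ≠ ⊥ := by rintro rfl; simp at hn
    obtain ⟨ρ, hρX, hρ⟩ := h.exists_root hE hX
    obtain ⟨t, -, ht⟩ := hρ.exists_reflection
    have hcut := h.cut hE hρX ht hρ.form_self
    have hfr := finrank_cut hE hρX hρ.form_self
    have hsub := ih hcut (by omega)
    have hρρ : E ρ ρ = 1 := by rw [hE.self, hρ.form_self]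
    intro m hm
    have h1 : m - E ρ m • ρ ∈ X ⊓ LinearMap.ker (E ρ) := by
      refine ⟨X.sub_mem hm (X.smul_mem _ hρX), ?_⟩
      show E ρ _ = 0
      simp [hρρ]
    have h2 := Submodule.span_mono (s := {τ | IsRoot cs τ ∧ τ ∈ X ⊓ LinearMap.ker (E ρ)})
      (t := {τ | IsRoot cs τ ∧ τ ∈ X}) (fun τ hτ => ⟨hτ.1, hτ.2.1⟩) (hsub h1)
    have h3 := Submodule.add_mem _ h2 (Submodule.smul_mem _ (E ρ m)
      (Submodule.subset_span (s := {τ | IsRoot cs τ ∧ τ ∈ X}) ⟨hρ, hρX⟩))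
    rwa [sub_add_cancel] at h3

end Noncrossing

/-! ### Cones of positive roots and their simple systems -/

section Cones

variable [Fintype B] [DecidableEq B] {cs : CoxeterSystem M W}
variable {X Y : Submodule ℝ (B → ℝ)}

variable (cs) in
/-- The positive roots lying in `X`. -/
def posRoots (X : Submodule ℝ (B → ℝ)) : Set (B → ℝ) := {ρ | IsRoot cs ρ ∧ 0 ≤ ρ ∧ ρ ∈ X}

variable (cs) in
/-- The convex cone spanned by the positive roots lying in `X`. -/
def cone (X : Submodule ℝ (B → ℝ)) : Submodule NNReal (B → ℝ) :=
  Submodule.span NNReal (posRoots cs X)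

/-- Nonnegative vectors form a cone. -/
def nonnegCone (B : Type*) : Submodule NNReal (B → ℝ) where
  carrier := {v | 0 ≤ v}
  add_mem' := fun {a b} (ha : 0 ≤ a) (hb : 0 ≤ b) => show 0 ≤ a + b from add_nonneg ha hb
  zero_mem' := show (0 : B → ℝ) ≤ 0 from le_rfl
  smul_mem' := fun c _ hv k => mul_nonneg c.2 (hv k)

lemma mem_nonnegCone {v : B → ℝ} : v ∈ nonnegCone B ↔ 0 ≤ v := Iff.rfl

lemma cone_nonneg {P : B → ℝ} (hP : P ∈ cone cs X) : 0 ≤ P :=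
  mem_nonnegCone.1
    ((Submodule.span_le.2 fun _ hρ => mem_nonnegCone.2 hρ.2.1 : cone cs X ≤ nonnegCone B) hP)

lemma cone_le : ∀ P ∈ cone cs X, P ∈ X := fun _ hP =>
  (Submodule.span_le.2 fun _ hρ => hρ.2.2 : cone cs X ≤ X.restrictScalars NNReal) hP

lemma posRoots_mono (h : X ≤ Y) : posRoots cs X ⊆ posRoots cs Y :=
  fun _ hρ => ⟨hρ.1, hρ.2.1, h hρ.2.2⟩

lemma cone_mono (h : X ≤ Y) : cone cs X ≤ cone cs Y := Submodule.span_mono (posRoots_mono h)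

lemma real_smul_mem {C : Submodule NNReal (B → ℝ)} {c : ℝ} (hc : 0 ≤ c) {v : B → ℝ}
    (hv : v ∈ C) : c • v ∈ C := C.smul_mem (⟨c, hc⟩ : NNReal) hv

lemma IsRoot.sum_pos {ρ : B → ℝ} (hρ : IsRoot cs ρ) (h : 0 ≤ ρ) : 0 < ∑ k, ρ k := by
  refine lt_of_le_of_ne (Finset.sum_nonneg fun k _ => h k) fun h0 => hρ.ne_zero ?_
  ext k
  exact (Finset.sum_eq_zero_iff_of_nonneg fun k _ => h k).1 h0.symm k (Finset.mem_univ k)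

/-- A positive root proportional to a simple root equals it. -/
lemma IsRoot.eq_sroot {ρ : B → ℝ} (hρ : IsRoot cs ρ) (h : 0 ≤ ρ) {i : B}
    (hi : ∀ k, k ≠ i → ρ k = 0) : ρ = sroot i := by
  have h1 : ρ = ρ i • sroot i := by
    ext k
    by_cases hk : k = i
    · subst hk; simp [sroot]
    · simp [sroot, hk, hi k hk]
  have h2 := hρ.form_self
  rw [h1] at h2
  simp only [map_smul, LinearMap.smul_apply, form_sroot_self, smul_eq_mul, mul_one] at h2
  have h3 : ρ i = 1 := by
    have := h i
    simp only [Pi.zero_apply] at this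
    nlinarith
  rw [h1, h3, one_smul]

lemma form_sroot_nonpos {i : B} {v : B → ℝ} (hv : 0 ≤ v) (hi : v i = 0) :
    form M (sroot i) v ≤ 0 := by
  rw [eq_sum_sroot v, map_sum]
  refine Finset.sum_nonpos fun k _ => ?_
  rw [map_smul, smul_eq_mul]
  by_cases hk : k = i
  · rw [hk, hi, zero_mul]
  · refine mul_nonpos_of_nonneg_of_nonpos (hv k) ?_
    rw [form_sroot, neg_nonpos]
    have h1 : M i k ≠ 1 := M.off_diagonal i k (Ne.symm hk)
    rcases Nat.eq_zero_or_pos (M i k) with h0 | h0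
    · rw [h0]; simp
    · have h2 : (2 : ℝ) ≤ (M i k : ℝ) := by exact_mod_cast (by omega : 2 ≤ M i k)
      refine cos_nonneg_of_neg_pi_div_two_le_of_le ?_ ?_
      · have : 0 ≤ π / (M i k : ℝ) := by positivity
        linarith [pi_pos]
      · exact div_le_div_of_nonneg_left pi_pos.le (by norm_num) h2

/-- A simple reflection permutes the positive roots other than its own root. -/
lemma IsRoot.srefl_nonneg {ρ : B → ℝ} (hρ : IsRoot cs ρ) (h : 0 ≤ ρ) {i : B}
    (hne : ρ ≠ sroot i) : 0 ≤ srefl M i ρ := by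
  have hr : IsRoot cs (srefl M i ρ) := by rw [← rep_simple cs]; exact hρ.rep _
  rcases hr.nonneg_or_nonpos with h1 | h1
  · exact h1
  · exfalso
    refine hne (hρ.eq_sroot h fun k hk => ?_)
    have := h1 k
    rw [srefl_apply] at this
    simp [sroot, hk] at this
    exact le_antisymm this (h k)

/-- The positive roots of a subspace lie in the cone over finitely many of them which make pairwise
non-acute angles. -/
lemma exists_base [Fintype W] (X : Submodule ℝ (B → ℝ)) :
    ∃ D : Finset (B → ℝ), (D : Set (B → ℝ)) ⊆ posRoots cs X ∧
      (cone cs X ≤ Submodule.span NNReal (D : Set (B → ℝ))) ∧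
      ∀ d ∈ D, ∀ d' ∈ D, d ≠ d' → form M d d' ≤ 0 := by
  have hfin : (posRoots cs X).Finite := finite_roots.subset fun ρ hρ => hρ.1
  let S : Set (Finset (B → ℝ)) := {D | (D : Set (B → ℝ)) ⊆ posRoots cs X ∧
    cone cs X ≤ Submodule.span NNReal (D : Set (B → ℝ))}
  have hne : S.Nonempty := ⟨hfin.toFinset, by simp, by simp [cone]⟩
  obtain ⟨D, ⟨hDX, hDspan⟩, hmin⟩ := wellFounded_lt.has_min S hne
  -- no element of `D` is a nonnegative combination of the others
  have hirr : ∀ d ∈ D, d ∉ Submodule.span NNReal ((D.erase d : Finset _) : Set (B → ℝ)) := by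
    intro d hd hmem
    refine hmin (D.erase d) ⟨fun x hx => hDX (Finset.erase_subset _ _ hx), hDspan.trans ?_⟩
      (Finset.erase_ssubset hd)
    refine Submodule.span_le.2 fun x hx => ?_
    by_cases hxd : x = d
    · rw [hxd]; exact hmem
    · exact Submodule.subset_span (by simpa [hxd] using hx)
  -- hence a multiple of `d` is such a combination only if it is not positive
  have hirr' : ∀ d ∈ D, ∀ d' ∈ D, d ≠ d' → ∀ (k c : ℝ), 0 < c →
      ∀ z ∈ Submodule.span NNReal ((D.erase d : Finset _) : Set (B → ℝ)),
      k • d = c • d' + z → False := by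
    intro d hd d' hd' hdd' k c hc z hz heq
    have hz0 : 0 ≤ z := by
      refine mem_nonnegCone.1 ((Submodule.span_le.2 fun x hx => ?_ :
        Submodule.span NNReal ((D.erase d : Finset _) : Set (B → ℝ)) ≤ nonnegCone B) hz)
      exact mem_nonnegCone.2 (hDX (Finset.erase_subset _ _ hx)).2.1
    have h1 := (hDX hd).1.sum_pos (hDX hd).2.1
    have h2 := (hDX hd').1.sum_pos (hDX hd').2.1
    have h3 : k * ∑ j, d j = c * ∑ j, d' j + ∑ j, z j := by
      have := congrArg (fun v : B → ℝ => ∑ j, v j) heq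
      simpa [Finset.sum_add_distrib, Finset.mul_sum] using this
    have h4 : 0 ≤ ∑ j, z j := Finset.sum_nonneg fun j _ => hz0 j
    have hk : 0 < k := by
      by_contra hk
      have : k * ∑ j, d j ≤ 0 := mul_nonpos_of_nonpos_of_nonneg (not_lt.1 hk) h1.le
      have : 0 < c * ∑ j, d' j := mul_pos hc h2
      linarith
    refine hirr d hd ?_
    have h5 : d = k⁻¹ • (c • d' + z) := by rw [← heq, smul_smul, inv_mul_cancel₀ hk.ne', one_smul]
    have h6 : d' ∈ Submodule.span NNReal ((D.erase d : Finset _) : Set (B → ℝ)) :=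
      Submodule.subset_span (by simpa [hdd'.symm] using hd')
    have h7 := real_smul_mem (inv_nonneg.2 hk.le)
      (Submodule.add_mem _ (real_smul_mem hc.le h6) hz)
    rwa [← h5] at h7
  have hdecomp : ∀ d ∈ D, ∀ x ∈ posRoots cs X, ∃ a : ℝ,
      ∃ z ∈ Submodule.span NNReal ((D.erase d : Finset _) : Set (B → ℝ)), x = a • d + z := by
    intro d hd x hx
    have h1 := hDspan (Submodule.subset_span hx)
    rw [← Finset.insert_erase hd, Finset.coe_insert, Submodule.mem_span_insert] at h1
    obtain ⟨a, z, hz, rfl⟩ := h1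
    exact ⟨a, z, hz, rfl⟩
  refine ⟨D, hDX, hDspan, fun d hd d' hd' hdd' => ?_⟩
  by_contra hpos
  push Not at hpos
  obtain ⟨t, -, ht⟩ := (hDX hd).1.exists_reflection
  have hε : IsRoot cs (d' - (2 * form M d' d) • d) := by
    rw [← ht]; exact (hDX hd').1.rep t
  have hεX : d' - (2 * form M d' d) • d ∈ X :=
    X.sub_mem (hDX hd').2.2 (X.smul_mem _ (hDX hd).2.2)
  rw [form_comm] at hpos
  rcases hε.nonneg_or_nonpos with h | h
  · obtain ⟨a, z, hz, heq⟩ := hdecomp d' hd' _ ⟨hε, h, hεX⟩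
    refine hirr' d' hd' d hd hdd'.symm (1 - a) (2 * form M d' d) (by linarith) z hz ?_
    rw [sub_eq_iff_eq_add] at heq
    rw [sub_smul, one_smul, sub_eq_iff_eq_add]
    conv_lhs => rw [heq]
    abel
  · obtain ⟨a, z, hz, heq⟩ := hdecomp d hd _ ⟨hε.neg, neg_nonneg.2 h, X.neg_mem hεX⟩
    refine hirr' d hd d' hd' hdd' (2 * form M d' d - a) 1 one_pos z hz ?_
    rw [neg_sub, sub_eq_iff_eq_add] at heq
    rw [sub_smul, one_smul, heq]
    abel

lemma mem_span_finset_nonneg {D : Finset (B → ℝ)} {v : B → ℝ}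
    (hv : v ∈ Submodule.span NNReal (D : Set (B → ℝ))) :
    ∃ c : (B → ℝ) → ℝ, (∀ d, 0 ≤ c d) ∧ v = ∑ d ∈ D, c d • d := by
  obtain ⟨f, -, hf⟩ := Submodule.mem_span_finset.1 hv
  exact ⟨fun d => f d, fun d => (f d).2, hf.symm⟩

/-- If `αᵢ ∈ X` and the hyperplane section `X'' = X ∩ {vᵢ = 0}` is spanned by roots, then `αᵢ`
together with a base of `X''` is a base of `X`: the cone of `X` is the sum of the ray of `αᵢ` and
the cone of `X''`. -/
lemma cone_split [Fintype W] {i : B} (hi : sroot i ∈ X) {X'' : Submodule ℝ (B → ℝ)}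
    (hX'' : ∀ v, v ∈ X'' ↔ v ∈ X ∧ v i = 0)
    (hspan : X'' ≤ Submodule.span ℝ {ρ | IsRoot cs ρ ∧ ρ ∈ X''}) {P : B → ℝ}
    (hP : P ∈ cone cs X) : P - P i • sroot i ∈ cone cs X'' := by
  obtain ⟨D, hDX, hDspan, hobt⟩ := exists_base (cs := cs) X
  have hnn : ∀ d ∈ D, 0 ≤ d := fun d hd => (hDX hd).2.1
  -- `αᵢ` spans an extremal ray of the nonnegative cone
  have hiD : sroot i ∈ D := by
    obtain ⟨c, hc, hsum⟩ := mem_span_finset_nonneg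
      (hDspan (Submodule.subset_span ⟨isRoot_sroot i, sroot_nonneg i, hi⟩))
    have h1 : ∃ d ∈ D, c d ≠ 0 := by
      by_contra hcon
      push Not at hcon
      rw [Finset.sum_eq_zero fun d hd => by rw [hcon d hd, zero_smul]] at hsum
      exact (isRoot_sroot (cs := cs) i).ne_zero hsum
    obtain ⟨d, hd, hcd⟩ := h1
    have h2 : d = sroot i := by
      refine (hDX hd).1.eq_sroot (hnn d hd) fun k hk => ?_
      have h3 := congrFun hsum k
      rw [Finset.sum_apply] at h3
      simp only [sroot, Pi.single_apply, hk, if_false, Pi.smul_apply, smul_eq_mul] at h3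
      have h4 := (Finset.sum_eq_zero_iff_of_nonneg
        fun d hd => mul_nonneg (hc d) (hnn d hd k)).1 h3.symm d hd
      exact (mul_eq_zero.1 h4).resolve_left hcd
    rwa [h2] at hd
  let D'' := D.filter fun d => d i = 0
  have hD''X : ∀ d ∈ D'', d ∈ X'' := fun d hd =>
    (hX'' d).2 ⟨(hDX (Finset.mem_filter.1 hd).1).2.2, (Finset.mem_filter.1 hd).2⟩
  -- the base elements in `X''` span `X''`
  have hface : ∀ ρ ∈ posRoots cs X'', ρ ∈ Submodule.span ℝ (D'' : Set (B → ℝ)) := by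
    intro ρ hρ
    obtain ⟨c, hc, hsum⟩ := mem_span_finset_nonneg
      (hDspan (Submodule.subset_span ⟨hρ.1, hρ.2.1, ((hX'' ρ).1 hρ.2.2).1⟩))
    have h3 := congrFun hsum i
    rw [((hX'' ρ).1 hρ.2.2).2, Finset.sum_apply] at h3
    simp only [Pi.smul_apply, smul_eq_mul] at h3
    have h4 := (Finset.sum_eq_zero_iff_of_nonneg
      fun d hd => mul_nonneg (hc d) (hnn d hd i)).1 h3.symm
    rw [hsum]
    refine Submodule.sum_mem _ fun d hd => ?_
    rcases mul_eq_zero.1 (h4 d hd) with h | h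
    · rw [h, zero_smul]; exact Submodule.zero_mem _
    · exact Submodule.smul_mem _ _ (Submodule.subset_span (by simp [D'', hd, h]))
  have hX''span : X'' ≤ Submodule.span ℝ (D'' : Set (B → ℝ)) := by
    refine hspan.trans (Submodule.span_le.2 ?_)
    rintro ρ ⟨hρ, hρX⟩
    rcases hρ.nonneg_or_nonpos with h | h
    · exact hface ρ ⟨hρ, h, hρX⟩
    · have := hface (-ρ) ⟨hρ.neg, neg_nonneg.2 h, X''.neg_mem hρX⟩
      simpa using this
  have hbase : ∀ ε ∈ D, ε = sroot i ∨ ε i = 0 := by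
    intro ε hε
    by_contra hcon
    push Not at hcon
    obtain ⟨hne, hεi⟩ := hcon
    have hεX : ε - ε i • sroot i ∈ X'' := by
      refine (hX'' _).2 ⟨X.sub_mem (hDX hε).2.2 (X.smul_mem _ hi), ?_⟩
      simp [sroot]
    obtain ⟨b, -, hb⟩ := Submodule.mem_span_finset.1 (hX''span hεX)
    set Bp : B → ℝ := ∑ d ∈ D'', max (b d) 0 • d with hBp
    set Bm : B → ℝ := ∑ d ∈ D'', max (-b d) 0 • d with hBm
    have hBpm : ε i • sroot i + Bp = ε + Bm := by
      have h1 : Bp - Bm = ε - ε i • sroot i := by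
        rw [← hb, hBp, hBm, ← Finset.sum_sub_distrib]
        refine Finset.sum_congr rfl fun d _ => ?_
        rw [← sub_smul]
        congr 1
        rcases le_total 0 (b d) with h | h
        · rw [max_eq_left h, max_eq_right (by linarith)]; ring
        · rw [max_eq_right h, max_eq_left (by linarith)]; ring
      have h2 : Bp = Bm + (ε - ε i • sroot i) := by rw [← h1]; abel
      rw [h2]; abel
    have hD''D : ∀ d ∈ D'', d ∈ D := fun d hd => (Finset.mem_filter.1 hd).1
    have hD''i : ∀ d ∈ D'', d i = 0 := fun d hd => (Finset.mem_filter.1 hd).2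
    have hi0 : ∀ d ∈ D'', sroot i ≠ d := by
      rintro d hd rfl
      have := hD''i _ hd
      simp [sroot] at this
    have hε0 : ∀ d ∈ D'', d ≠ ε := by
      rintro d hd rfl
      exact hεi (hD''i _ hd)
    have hεi' : 0 ≤ ε i := hnn ε hε i
    have t1 : form M (sroot i) ε ≤ 0 := hobt _ hiD _ hε (Ne.symm hne)
    have t2 : form M (sroot i) Bm ≤ 0 := by
      rw [hBm, map_sum]
      refine Finset.sum_nonpos fun d hd => ?_
      rw [map_smul, smul_eq_mul]
      exact mul_nonpos_of_nonneg_of_nonpos (le_max_right _ _)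
        (hobt _ hiD _ (hD''D d hd) (hi0 d hd))
    have t3 : form M Bp ε ≤ 0 := by
      rw [hBp, map_sum, LinearMap.sum_apply]
      refine Finset.sum_nonpos fun d hd => ?_
      rw [map_smul, LinearMap.smul_apply, smul_eq_mul]
      exact mul_nonpos_of_nonneg_of_nonpos (le_max_right _ _)
        (hobt _ (hD''D d hd) _ hε (hε0 d hd))
    have t4 : form M Bp Bm ≤ 0 := by
      rw [hBm, map_sum]
      refine Finset.sum_nonpos fun d' hd' => ?_
      rw [hBp, map_sum, LinearMap.sum_apply]
      refine Finset.sum_nonpos fun d hd => ?_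
      rw [map_smul, map_smul, LinearMap.smul_apply, smul_eq_mul, smul_eq_mul, mul_left_comm,
        ← mul_assoc]
      by_cases hdd : d = d'
      · subst hdd
        have : max (b d) 0 * max (-b d) 0 = 0 := by
          rcases le_total 0 (b d) with h | h
          · rw [max_eq_right (a := -b d) (by linarith), mul_zero]
          · rw [max_eq_right h, zero_mul]
        rw [this, zero_mul]
      · exact mul_nonpos_of_nonneg_of_nonpos
          (mul_nonneg (le_max_right _ _) (le_max_right _ _))
          (hobt _ (hD''D d hd) _ (hD''D d' hd') hdd)
    have t5 : form M (ε i • sroot i + Bp) (ε i • sroot i + Bp) ≤ 0 := by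
      conv_lhs => enter [2]; rw [hBpm]
      simp only [map_add, map_smul, LinearMap.add_apply, LinearMap.smul_apply, smul_eq_mul]
      have h1 := mul_nonpos_of_nonneg_of_nonpos hεi' t1
      have h2 := mul_nonpos_of_nonneg_of_nonpos hεi' t2
      linarith
    have t6 : ε i • sroot i + Bp = 0 := by
      by_contra h0
      exact absurd (form_self_pos cs _ h0) (not_lt.2 t5)
    have t7 := congrFun t6 i
    simp only [Pi.add_apply, Pi.smul_apply, sroot, Pi.single_eq_same, smul_eq_mul, mul_one,
      Pi.zero_apply] at t7
    have t8 : Bp i = 0 := by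
      rw [hBp, Finset.sum_apply]
      exact Finset.sum_eq_zero fun d hd => by rw [Pi.smul_apply, hD''i d hd, smul_zero]
    rw [t8, add_zero] at t7
    exact hεi t7
  refine Submodule.span_induction (p := fun P _ => P - P i • sroot i ∈ cone cs X'')
    ?_ ?_ ?_ ?_ (hDspan hP)
  · intro d hd
    rcases hbase d hd with rfl | h
    · simp [sroot]
    · rw [h, zero_smul, sub_zero]
      exact Submodule.subset_span ⟨(hDX hd).1, (hDX hd).2.1, (hX'' d).2 ⟨(hDX hd).2.2, h⟩⟩
  · simp
  · intro x y _ _ hx hy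
    have := Submodule.add_mem _ hx hy
    convert this using 1
    rw [Pi.add_apply]; module
  · intro a x _ hx
    have := Submodule.smul_mem _ a hx
    convert this using 1
    simp only [NNReal.smul_def, Pi.smul_apply, smul_eq_mul]; module

end Cones

/-! ### Euler forms adapted to a word, and rotation -/

section Meet

variable [Fintype B] [DecidableEq B] {cs : CoxeterSystem M W}
variable {E : LinearMap.BilinForm ℝ (B → ℝ)} {g : W} {X Z : Submodule ℝ (B → ℝ)}
variable {L : List B} {i : B} {P : B → ℝ}

/-- The coordinate subspace spanned by the simple roots occurring in `L`. -/
def coordSpace (L : List B) : Submodule ℝ (B → ℝ) where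
  carrier := {v | ∀ k ∉ L, v k = 0}
  add_mem' := fun {a b} ha hb k hk => by rw [Pi.add_apply, ha k hk, hb k hk, add_zero]
  zero_mem' := fun _ _ => rfl
  smul_mem' := fun c v hv k hk => by rw [Pi.smul_apply, hv k hk, smul_zero]

lemma mem_coordSpace {v : B → ℝ} : v ∈ coordSpace L ↔ ∀ k ∉ L, v k = 0 := Iff.rfl

/-- `E` is an Euler form which is upper triangular on the simple roots in the (repetition free)
word `L`. This is the form attached to the Coxeter element with word `L` of the corresponding
parabolic subgroup. -/
structure Adapted (M : CoxeterMatrix B) (E : LinearMap.BilinForm ℝ (B → ℝ)) (L : List B) :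
    Prop where
  euler : IsEuler M E
  nodup : L.Nodup
  pair : L.Pairwise fun j k => E (sroot j) (sroot k) = 0

lemma Adapted.tail (h : Adapted M E (i :: L)) : Adapted M E L :=
  ⟨h.euler, (List.nodup_cons.1 h.nodup).2, (List.pairwise_cons.1 h.pair).2⟩

lemma sub_mem_coordSpace {v : B → ℝ} (hv : v ∈ coordSpace (i :: L)) :
    v - v i • sroot i ∈ coordSpace L := by
  intro k hk
  by_cases hki : k = i
  · subst hki; simp [sroot]
  · have : v k = 0 := hv k (by simp [hki, hk])
    simp [sroot, hki, this]

lemma Adapted.apply_head (h : Adapted M E (i :: L)) {v : B → ℝ}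
    (hv : v ∈ coordSpace (i :: L)) : E (sroot i) v = v i := by
  have hii : E (sroot i) (sroot i) = 1 := by rw [h.euler.self, form_sroot_self]
  conv_lhs => rw [eq_sum_sroot v, map_sum]
  rw [Finset.sum_eq_single i]
  · rw [map_smul, hii, smul_eq_mul, mul_one]
  · intro k _ hki
    rw [map_smul, smul_eq_mul]
    by_cases hk : k ∈ L
    · rw [(List.pairwise_cons.1 h.pair).1 k hk, mul_zero]
    · rw [hv k (by simp [hki, hk]), zero_mul]
  · simp

lemma coordSpace_le_cons : coordSpace L ≤ coordSpace (i :: L) :=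
  fun _ hv k hk => hv k fun h => hk (List.mem_cons_of_mem _ h)

lemma sroot_mem_coordSpace (hi : i ∈ L) : sroot i ∈ coordSpace L := by
  intro k hk
  have : k ≠ i := fun h => hk (h ▸ hi)
  simp [sroot, this]

lemma rep_simple_apply (i : B) (x : B → ℝ) :
    rep cs (cs.simple i) x = x - (2 * form M x (sroot i)) • sroot i := by
  rw [rep_simple, srefl_apply]

/-- The product of an adapted word has the whole coordinate space as noncrossing subspace. -/
lemma Adapted.isNC (h : Adapted M E L) : IsNC cs E (cs.wordProd L) (coordSpace L) := by
  induction L with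
  | nil =>
    have : coordSpace ([] : List B) = ⊥ := by
      rw [eq_bot_iff]
      intro v hv
      exact (Submodule.mem_bot ℝ).2 (funext fun k => hv k (by simp))
    rw [this, cs.wordProd_nil]
    exact isNC_bot cs E
  | cons i L ih =>
    have hiL : i ∉ L := (List.nodup_cons.1 h.nodup).1
    have h1 := (ih h.tail).glue h.euler (ρ := sroot i)
      (fun m hm => by rw [h.apply_head (coordSpace_le_cons hm), hm i hiL])
      (rep_simple_apply i) (form_sroot_self i)
    have h2 : coordSpace L ⊔ Submodule.span ℝ {sroot i} = coordSpace (i :: L) := by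
      apply le_antisymm
      · refine sup_le coordSpace_le_cons ((Submodule.span_singleton_le_iff_mem _ _).2 ?_)
        exact sroot_mem_coordSpace (by simp)
      · intro v hv
        exact Submodule.mem_sup.2 ⟨_, sub_mem_coordSpace hv, v i • sroot i,
          Submodule.mem_span_singleton.2 ⟨_, rfl⟩, by module⟩
    rw [cs.wordProd_cons, ← h2]
    exact h1

variable (cs) in
/-- The bilinear form `E` transported along `w`. -/
noncomputable def conjForm (w : W) (E : LinearMap.BilinForm ℝ (B → ℝ)) :
    LinearMap.BilinForm ℝ (B → ℝ) := E.comp (rep cs w⁻¹) (rep cs w⁻¹)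

lemma conjForm_apply (w : W) (x y : B → ℝ) :
    conjForm cs w E x y = E (rep cs w⁻¹ x) (rep cs w⁻¹ y) := rfl

lemma conjForm_inv_conjForm (w : W) : conjForm cs w⁻¹ (conjForm cs w E) = E := by
  refine LinearMap.ext fun x => LinearMap.ext fun y => ?_
  rw [conjForm_apply, conjForm_apply, inv_inv, rep_inv_apply, rep_inv_apply]

lemma IsEuler.conj (hE : IsEuler M E) (w : W) : IsEuler M (conjForm cs w E) := by
  intro x y
  rw [conjForm_apply, conjForm_apply, hE, form_rep]

lemma IsNC.conj (h : IsNC cs E g X) (w : W) :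
    IsNC cs (conjForm cs w E) (w * g * w⁻¹) (X.map (rep cs w)) := by
  have key : ∀ v, v - rep cs (w * g * w⁻¹) v =
      rep cs w (rep cs w⁻¹ v - rep cs g (rep cs w⁻¹ v)) := by
    intro v
    rw [map_sub, rep_apply_inv, rep_mul_apply, rep_mul_apply]
  constructor
  · intro v
    rw [key]
    exact Submodule.mem_map_of_mem (h.sub_mem _)
  · rintro v _ ⟨m, hm, rfl⟩
    rw [key, conjForm_apply, rep_inv_apply, rep_inv_apply, h.eq _ m hm]
    conv_rhs => rw [← rep_apply_inv cs w v, form_rep]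

lemma map_inv_map (w : W) (X : Submodule ℝ (B → ℝ)) :
    (X.map (rep cs w)).map (rep cs w⁻¹) = X := by
  rw [← Submodule.map_comp]
  have : rep cs w⁻¹ ∘ₗ rep cs w = LinearMap.id :=
    LinearMap.ext fun x => rep_inv_apply cs w x
  rw [this, Submodule.map_id]

/-- Moving the first letter of an adapted word to the end. -/
lemma Adapted.rotate (h : Adapted M E (i :: L)) :
    Adapted M (conjForm cs (cs.simple i) E) (L ++ [i]) := by
  have hii : E (sroot i) (sroot i) = 1 := by rw [h.euler.self, form_sroot_self]
  have h0 := (List.pairwise_cons.1 h.pair).1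
  have h1 : ∀ j ∈ L, E (sroot j) (sroot i) = 2 * form M (sroot j) (sroot i) := by
    intro j hj
    have := h.euler (sroot j) (sroot i)
    rwa [h0 j hj, add_zero] at this
  refine ⟨h.euler.conj _, (List.perm_append_singleton i L).nodup_iff.2 h.nodup, ?_⟩
  rw [List.pairwise_append]
  refine ⟨(List.pairwise_cons.1 h.pair).2.imp_of_mem ?_, List.pairwise_singleton _ _, ?_⟩
  · intro j k hj hk hjk
    rw [conjForm_apply, cs.inv_simple, rep_simple_apply, rep_simple_apply]
    simp only [map_sub, map_smul, LinearMap.sub_apply, LinearMap.smul_apply, smul_eq_mul, hii,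
      h0 k hk, h1 j hj, hjk]
    ring
  · intro j hj k hk
    rw [List.mem_singleton] at hk
    subst hk
    rw [conjForm_apply, cs.inv_simple, rep_simple_apply, rep_simple_apply]
    simp only [map_sub, map_smul, LinearMap.sub_apply, LinearMap.smul_apply, smul_eq_mul, hii,
      h1 j hj, form_sroot_self]
    ring

lemma map_simple_le (hX : X ≤ coordSpace (i :: L)) :
    X.map (rep cs (cs.simple i)) ≤ coordSpace (L ++ [i]) := by
  rintro _ ⟨x, hx, rfl⟩ k hk
  have hkne : k ∉ i :: L := by simpa [or_comm, not_or, and_comm] using hk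
  have hki : k ≠ i := fun h => hkne (by simp [h])
  rw [rep_simple_apply]
  simp [sroot, hki, hX hx k hkne]

/-- The `i`-th coordinate after rotation by the first letter `i`. -/
lemma Adapted.rep_simple_coord (h : Adapted M E (i :: L)) (hP : P ∈ coordSpace (i :: L)) :
    rep cs (cs.simple i) P i = -E P (sroot i) := by
  have h1 := h.euler P (sroot i)
  rw [h.apply_head hP] at h1
  rw [rep_simple_apply]
  simp only [Pi.sub_apply, Pi.smul_apply, sroot, Pi.single_eq_same, smul_eq_mul, mul_one] at h1 ⊢
  linarith

lemma rep_simple_mem_cone (hi : sroot i ∉ X) (hP : P ∈ cone cs X) :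
    rep cs (cs.simple i) P ∈ cone cs (X.map (rep cs (cs.simple i))) := by
  refine Submodule.span_induction (p := fun P _ => rep cs (cs.simple i) P ∈
    cone cs (X.map (rep cs (cs.simple i)))) ?_ ?_ ?_ ?_ hP
  · rintro ρ ⟨hρ, hρ0, hρX⟩
    refine Submodule.subset_span ⟨hρ.rep _, ?_, Submodule.mem_map_of_mem hρX⟩
    rw [rep_simple]
    exact hρ.srefl_nonneg hρ0 fun h => hi (h ▸ hρX)
  · rw [map_zero]; exact Submodule.zero_mem _
  · intro x y _ _ hx hy
    rw [map_add]; exact Submodule.add_mem _ hx hy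
  · intro a x _ hx
    rw [NNReal.smul_def, map_smul]; exact Submodule.smul_mem _ a hx

/-- The section of a noncrossing subspace by the hyperplane of the first letter. -/
lemma Adapted.mem_cut_iff (h : Adapted M E (i :: L)) (hX : X ≤ coordSpace (i :: L)) (v : B → ℝ) :
    v ∈ X ⊓ LinearMap.ker (E (sroot i)) ↔ v ∈ X ∧ v i = 0 := by
  rw [Submodule.mem_inf, LinearMap.mem_ker]
  refine and_congr_right fun hv => ?_
  rw [h.apply_head (hX hv)]

lemma Adapted.cone_cut [Fintype W] (h : Adapted M E (i :: L)) (hX : X ≤ coordSpace (i :: L))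
    (hN : IsNC cs E g X) (hi : sroot i ∈ X) (hP : P ∈ cone cs X) :
    P - P i • sroot i ∈ cone cs (X ⊓ LinearMap.ker (E (sroot i))) :=
  cone_split hi (h.mem_cut_iff hX)
    ((hN.cut h.euler hi (rep_simple_apply i) (form_sroot_self i)).le_span_roots h.euler) hP

lemma Adapted.rep_simple_mem_cone_of_nonpos [Fintype W] (h : Adapted M E (i :: L))
    (hX : X ≤ coordSpace (i :: L)) (hN : IsNC cs E g X) (hi : sroot i ∈ X) (hP : P ∈ cone cs X)
    (hneg : E P (sroot i) ≤ 0) :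
    rep cs (cs.simple i) P ∈ cone cs (X.map (rep cs (cs.simple i))) := by
  have hmap : X ≤ X.map (rep cs (cs.simple i)) := by
    intro x hx
    refine ⟨rep cs (cs.simple i) x, ?_, ?_⟩
    · rw [rep_simple_apply]; exact X.sub_mem hx (X.smul_mem _ hi)
    · rw [rep_simple, srefl_srefl]
  refine cone_mono hmap ?_
  have h1 := cone_mono inf_le_left (h.cone_cut hX hN hi hP)
  have h2 : rep cs (cs.simple i) P = (P - P i • sroot i) + (-E P (sroot i)) • sroot i := by
    rw [← h.rep_simple_coord (cs := cs) (hX (cone_le P hP)), rep_simple_apply]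
    simp only [Pi.sub_apply, Pi.smul_apply, sroot, Pi.single_eq_same, smul_eq_mul, mul_one]
    module
  rw [h2]
  exact Submodule.add_mem _ h1 (real_smul_mem (by linarith)
    (Submodule.subset_span ⟨isRoot_sroot i, sroot_nonneg i, hi⟩))

/-! ### Rotating a point out of the positive cone -/

/-- Apply the letters of `L` cyclically as simple reflections, `k` times in total. -/
noncomputable def act (M : CoxeterMatrix B) : ℕ → List B → (B → ℝ) → (B → ℝ)
  | 0, _, P => P
  | _ + 1, [], P => P
  | k + 1, i :: L, P => act M k (L ++ [i]) (srefl M i P)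

lemma act_append (L₁ L₂ : List B) (k : ℕ) (P : B → ℝ) :
    act M (L₁.length + k) (L₁ ++ L₂) P =
      act M k (L₂ ++ L₁) (rep cs (cs.wordProd L₁)⁻¹ P) := by
  induction L₁ generalizing L₂ P with
  | nil => simp
  | cons i L₁ ih =>
    have h1 : (i :: L₁).length + k = (L₁.length + k) + 1 := by simp; omega
    rw [h1, List.cons_append, act, List.append_assoc, ih, cs.wordProd_cons, mul_inv_rev,
      rep_mul_apply, cs.inv_simple, rep_simple]
    simp

lemma act_mul (L : List B) (m : ℕ) (P : B → ℝ) :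
    act M (L.length * m) L P = rep cs ((cs.wordProd L)⁻¹ ^ m) P := by
  induction m generalizing P with
  | zero => simp [act]
  | succ m ih =>
    have h := act_append (cs := cs) L [] (L.length * m) P
    rw [List.append_nil, List.nil_append] at h
    rw [Nat.mul_succ, Nat.add_comm, h, ih, pow_succ, rep_mul_apply]

/-- A nonzero positive vector does not stay positive under all rotations, because the Coxeter
element has no nonzero fixed vector in the coordinate space. -/
lemma Adapted.exists_act_not_nonneg [Fintype W] (h : Adapted M E L) (hP : P ∈ coordSpace L)
    (hP0 : P ≠ 0) (cs : CoxeterSystem M W) : ∃ k, ¬ 0 ≤ act M k L P := by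
  by_contra hcon
  push Not at hcon
  apply hP0
  set γ := cs.wordProd L
  have hnn : ∀ m : ℕ, 0 ≤ rep cs (γ⁻¹ ^ m) P := fun m => by
    rw [← act_mul]; exact hcon _
  have hN := h.isNC (cs := cs)
  have hmem : ∀ m : ℕ, rep cs (γ⁻¹ ^ m) P ∈ coordSpace L := by
    intro m
    induction m with
    | zero => simpa using hP
    | succ m ih =>
      have h1 := hN.sub_mem (rep cs (γ⁻¹ ^ (m + 1)) P)
      rw [← rep_mul_apply, pow_succ', ← mul_assoc, mul_inv_cancel, one_mul] at h1
      have := Submodule.add_mem _ h1 ih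
      rwa [sub_add_cancel, ← pow_succ'] at this
  let N := orderOf γ⁻¹
  have hN0 : 0 < N := orderOf_pos _
  let S : B → ℝ := ∑ m ∈ Finset.range N, rep cs (γ⁻¹ ^ m) P
  have hS : rep cs γ⁻¹ S = S := by
    have h1 : rep cs γ⁻¹ S = ∑ m ∈ Finset.range N, rep cs (γ⁻¹ ^ (m + 1)) P := by
      rw [map_sum]
      exact Finset.sum_congr rfl fun m _ => by rw [pow_succ', rep_mul_apply]
    have h2 := Finset.sum_range_succ (fun m => rep cs (γ⁻¹ ^ m) P) N
    have h3 := Finset.sum_range_succ' (fun m => rep cs (γ⁻¹ ^ m) P) N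
    rw [h2] at h3
    rw [h1]
    have h4 : rep cs (γ⁻¹ ^ N) P = rep cs (γ⁻¹ ^ 0) P := by
      rw [pow_orderOf_eq_one, pow_zero]
    rw [h4] at h3
    exact (add_right_cancel h3).symm
  have hS' : rep cs γ S = S := by
    conv_lhs => rw [← hS]
    rw [rep_apply_inv]
  have hSmem : S ∈ coordSpace L := Submodule.sum_mem _ fun m _ => hmem m
  have hS0 : S = 0 := eq_zero_of_form_self cs ((hN.rep_eq_iff h.euler S).1 hS' S hSmem)
  have hle : P ≤ S := by
    have := Finset.single_le_sum (f := fun m => rep cs (γ⁻¹ ^ m) P) (fun m _ => hnn m)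
      (Finset.mem_range.2 hN0)
    simpa only [pow_zero, map_one, Module.End.one_apply] using this
  refine le_antisymm (hS0 ▸ hle) ?_
  simpa using hnn 0

/-! ### Meets of noncrossing subspaces -/

variable (cs) in
/-- Some noncrossing subspace contains `P` and lies in both `X` and `Z`. -/
def MeetAt (E : LinearMap.BilinForm ℝ (B → ℝ)) (X Z : Submodule ℝ (B → ℝ)) (P : B → ℝ) : Prop :=
  ∃ Y g, IsNC cs E g Y ∧ Y ≤ X ∧ Y ≤ Z ∧ P ∈ Y

lemma MeetAt.of_map {w : W} (h : MeetAt cs (conjForm cs w E) (X.map (rep cs w))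
    (Z.map (rep cs w)) (rep cs w P)) : MeetAt cs E X Z P := by
  obtain ⟨Y, g, hN, hX, hZ, hP⟩ := h
  have h1 := hN.conj w⁻¹
  rw [conjForm_inv_conjForm] at h1
  refine ⟨_, _, h1, ?_, ?_, ?_⟩
  · rw [← map_inv_map (cs := cs) w X]; exact Submodule.map_mono hX
  · rw [← map_inv_map (cs := cs) w Z]; exact Submodule.map_mono hZ
  · exact ⟨_, hP, rep_inv_apply cs w P⟩

/-- A point common to the positive cones of two noncrossing subspaces lies in a noncrossing
subspace contained in both. If the first letter of the word lies in both subspaces it can be split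
off; otherwise the word can be rotated, and the point cannot stay positive forever. -/
theorem meetAt [Fintype W] {gx gz : W} (h : Adapted M E L)
    (hX : IsNC cs E gx X) (hZ : IsNC cs E gz Z)
    (hXL : X ≤ coordSpace L) (hZL : Z ≤ coordSpace L)
    (hPX : P ∈ cone cs X) (hPZ : P ∈ cone cs Z) : MeetAt cs E X Z P := by
  induction hn : L.length generalizing L E X Z gx gz P with
  | zero =>
    rw [List.length_eq_zero_iff] at hn
    subst hn
    have hP0 : P = 0 := funext fun k => hXL (cone_le P hPX) k (by simp)
    exact ⟨⊥, 1, isNC_bot cs E, bot_le, bot_le, by simp [hP0]⟩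
  | succ n ih =>
    by_cases hP0 : P = 0
    · exact ⟨⊥, 1, isNC_bot cs E, bot_le, bot_le, by simp [hP0]⟩
    obtain ⟨k, hk⟩ := h.exists_act_not_nonneg (hXL (cone_le P hPX)) hP0 cs
    clear hP0
    induction k generalizing L E X Z gx gz P with
    | zero => exact absurd (cone_nonneg hPX) hk
    | succ k ihk =>
      obtain ⟨i, L, rfl⟩ : ∃ i L', L = i :: L' := List.exists_cons_of_length_eq_add_one hn
      by_cases hi : sroot i ∈ X ∧ sroot i ∈ Z
      · obtain ⟨hiX, hiZ⟩ := hi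
        have cX := hX.cut h.euler hiX (rep_simple_apply i) (form_sroot_self i)
        have cZ := hZ.cut h.euler hiZ (rep_simple_apply i) (form_sroot_self i)
        have hle : ∀ {U : Submodule ℝ (B → ℝ)}, U ≤ coordSpace (i :: L) →
            U ⊓ LinearMap.ker (E (sroot i)) ≤ coordSpace L := by
          intro U hU v hv
          obtain ⟨hvU, hvi⟩ := (h.mem_cut_iff hU v).1 hv
          have := sub_mem_coordSpace (hU hvU)
          rwa [hvi, zero_smul, sub_zero] at this
        obtain ⟨Y, g, hN, hYX, hYZ, hPY⟩ := ih h.tail cX cZ (hle hXL) (hle hZL)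
          (h.cone_cut hXL hX hiX hPX) (h.cone_cut hZL hZ hiZ hPZ) (by simpa using hn)
        refine ⟨_, _, hN.glue h.euler (fun m hm => (hYX hm).2) (rep_simple_apply i)
          (form_sroot_self i), ?_, ?_, ?_⟩
        · exact sup_le (hYX.trans inf_le_left) ((Submodule.span_singleton_le_iff_mem _ _).2 hiX)
        · exact sup_le (hYZ.trans inf_le_left) ((Submodule.span_singleton_le_iff_mem _ _).2 hiZ)
        · exact Submodule.mem_sup.2 ⟨_, hPY, P i • sroot i,
            Submodule.mem_span_singleton.2 ⟨_, rfl⟩, by module⟩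
      · have hPL : P ∈ coordSpace (i :: L) := hXL (cone_le P hPX)
        -- `P` has nonpositive pairing with `αᵢ` as soon as one of the cones avoids `αᵢ`
        have hneg : ∀ {U : Submodule ℝ (B → ℝ)}, sroot i ∉ U → P ∈ cone cs U →
            E P (sroot i) ≤ 0 := by
          intro U hU hPU
          have := cone_nonneg (rep_simple_mem_cone hU hPU) i
          rw [h.rep_simple_coord hPL, Pi.zero_apply] at this
          linarith
        have hneg' : E P (sroot i) ≤ 0 := by
          by_cases hiX : sroot i ∈ X
          · exact hneg (fun hiZ => hi ⟨hiX, hiZ⟩) hPZ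
          · exact hneg hiX hPX
        have hmem : ∀ {U : Submodule ℝ (B → ℝ)} {gu : W}, IsNC cs E gu U →
            U ≤ coordSpace (i :: L) → P ∈ cone cs U →
            rep cs (cs.simple i) P ∈ cone cs (U.map (rep cs (cs.simple i))) := by
          intro U gu hU hUL hPU
          by_cases hiU : sroot i ∈ U
          · exact h.rep_simple_mem_cone_of_nonpos hUL hU hiU hPU hneg'
          · exact rep_simple_mem_cone hiU hPU
        refine MeetAt.of_map (w := cs.simple i) ?_
        refine ihk h.rotate (hX.conj _) (hZ.conj _) (map_simple_le hXL) (map_simple_le hZL)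
          (hmem hX hXL hPX) (hmem hZ hZL hPZ) (by simpa using hn) ?_
        rw [rep_simple]
        exact hk

end Meet

/-! ### Reflection length and the reflection order -/

section Order

variable (cs : CoxeterSystem M W)

lemma rlen_spec (w : W) :
    ∃ l : List W, (∀ t ∈ l, cs.IsReflection t) ∧ l.length = rlen cs w ∧ l.prod = w := by
  have hne : {k | ∃ l : List W, (∀ t ∈ l, cs.IsReflection t) ∧ l.length = k ∧
      l.prod = w}.Nonempty := by
    obtain ⟨ω, rfl⟩ := cs.wordProd_surjective w
    refine ⟨_, ω.map cs.simple, ?_, rfl, rfl⟩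
    intro t ht
    obtain ⟨i, -, rfl⟩ := List.mem_map.1 ht
    exact cs.isReflection_simple i
  exact Nat.sInf_mem hne

lemma rlen_prod_le (l : List W) (hl : ∀ t ∈ l, cs.IsReflection t) :
    rlen cs l.prod ≤ l.length := Nat.sInf_le ⟨l, hl, rfl, rfl⟩

lemma rlen_mul_le (u v : W) : rlen cs (u * v) ≤ rlen cs u + rlen cs v := by
  obtain ⟨l, hl, hll, rfl⟩ := rlen_spec cs u
  obtain ⟨l', hl', hll', rfl⟩ := rlen_spec cs v
  rw [← hll, ← hll', ← List.length_append, ← List.prod_append]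
  refine rlen_prod_le cs _ fun t ht => ?_
  rcases List.mem_append.1 ht with h | h
  exacts [hl t h, hl' t h]

lemma rlen_one : rlen cs 1 = 0 := Nat.le_zero.1 (rlen_prod_le cs [] (by simp))

lemma eq_one_of_rlen {w : W} (h : rlen cs w = 0) : w = 1 := by
  obtain ⟨l, -, hl, rfl⟩ := rlen_spec cs w
  rw [h, List.length_eq_zero_iff] at hl
  rw [hl, List.prod_nil]

lemma rlen_conj_le (v w : W) : rlen cs (v * w * v⁻¹) ≤ rlen cs w := by
  obtain ⟨l, hl, hll, rfl⟩ := rlen_spec cs w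
  rw [← hll, ← MulAut.conj_apply, map_list_prod, ← List.length_map (MulAut.conj v)]
  refine rlen_prod_le cs _ fun t ht => ?_
  obtain ⟨t, h, rfl⟩ := List.mem_map.1 ht
  exact (hl t h).conj v

lemma rlen_conj (v w : W) : rlen cs (v * w * v⁻¹) = rlen cs w := by
  refine le_antisymm (rlen_conj_le cs v w) ?_
  have := rlen_conj_le cs v⁻¹ (v * w * v⁻¹)
  simpa [mul_assoc] using this

lemma rle_conj {x z : W} (v : W) (h : rle cs x z) : rle cs (v * x * v⁻¹) (v * z * v⁻¹) := by
  unfold rle at h ⊢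
  have : (v * x * v⁻¹)⁻¹ * (v * z * v⁻¹) = v * (x⁻¹ * z) * v⁻¹ := by group
  rw [this, rlen_conj, rlen_conj, rlen_conj, h]

variable {cs}

lemma rle_trans {u v w : W} (h1 : rle cs u v) (h2 : rle cs v w) : rle cs u w := by
  unfold rle at *
  have e1 : u * (u⁻¹ * w) = w := by group
  have e2 : (u⁻¹ * v) * (v⁻¹ * w) = u⁻¹ * w := by group
  have i1 := rlen_mul_le cs u (u⁻¹ * w)
  have i2 := rlen_mul_le cs (u⁻¹ * v) (v⁻¹ * w)
  rw [e1] at i1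
  rw [e2] at i2
  omega

lemma rle_antisymm {u v : W} (h1 : rle cs u v) (h2 : rle cs v u) : u = v := by
  unfold rle at *
  exact inv_mul_eq_one.1 (eq_one_of_rlen cs (by omega : rlen cs (u⁻¹ * v) = 0))

lemma rle_inv_mul {u p s : W} (h1 : rle cs u p) (h2 : rle cs p s) :
    rle cs (u⁻¹ * p) (u⁻¹ * s) := by
  have h3 := rle_trans h1 h2
  unfold rle at *
  have e : (u⁻¹ * p)⁻¹ * (u⁻¹ * s) = p⁻¹ * s := by group
  rw [e]
  omega

lemma inv_mul_rle {u s : W} (h : rle cs u s) : rle cs (u⁻¹ * s) s := by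
  unfold rle at *
  have e : (u⁻¹ * s)⁻¹ * s = s⁻¹ * u * s⁻¹⁻¹ := by group
  rw [e, rlen_conj]
  omega

lemma rle_mul {u s y : W} (h : rle cs u s) (hy : rle cs y (u⁻¹ * s)) :
    rle cs u (u * y) ∧ rle cs (u * y) s := by
  unfold rle at *
  have e1 : u⁻¹ * (u * y) = y := by group
  have e2 : (u * y)⁻¹ * s = y⁻¹ * (u⁻¹ * s) := by group
  have e3 : (u * y) * (y⁻¹ * (u⁻¹ * s)) = s := by group
  have i1 := rlen_mul_le cs u y
  have i2 := rlen_mul_le cs (u * y) (y⁻¹ * (u⁻¹ * s))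
  rw [e3] at i2
  rw [e1, e2]
  omega

lemma rle_mul_of_inv_mul_rle {u p y : W} (hup : rle cs u p) (huy : rle cs u (u * y))
    (h : rle cs (u⁻¹ * p) y) : rle cs p (u * y) := by
  unfold rle at *
  have e1 : u⁻¹ * (u * y) = y := by group
  have e2 : (u⁻¹ * p)⁻¹ * y = p⁻¹ * (u * y) := by group
  rw [e1] at huy
  rw [e2] at h
  omega

/-! ### Noncrossing subspaces and the reflection order -/

variable [Fintype B] [DecidableEq B]
variable {E : LinearMap.BilinForm ℝ (B → ℝ)} {g x z : W} {X Z : Submodule ℝ (B → ℝ)}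

lemma exists_moved_space (l : List W) (hl : ∀ t ∈ l, cs.IsReflection t) :
    ∃ U : Submodule ℝ (B → ℝ), Module.finrank ℝ U ≤ l.length ∧
      ∀ v, v - rep cs l.prod v ∈ U := by
  induction l with
  | nil => exact ⟨⊥, by simp, by simp⟩
  | cons t l ih =>
    obtain ⟨U, hU, hmem⟩ := ih fun t ht => hl t (List.mem_cons_of_mem _ ht)
    obtain ⟨ρ, -, hρ⟩ := exists_root_of_isReflection (hl t (by simp))
    refine ⟨U ⊔ Submodule.span ℝ {ρ}, ?_, fun v => ?_⟩
    · have h1 := Submodule.finrank_add_le_finrank_add_finrank U (Submodule.span ℝ {ρ})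
      have h2 := finrank_span_le_card (R := ℝ) ({ρ} : Set (B → ℝ))
      rw [Set.toFinset_singleton, Finset.card_singleton] at h2
      rw [List.length_cons]
      omega
    · have : v - rep cs (t :: l).prod v =
          (v - rep cs l.prod v) + (2 * form M (rep cs l.prod v) ρ) • ρ := by
        rw [List.prod_cons, rep_mul_apply, hρ]; module
      rw [this]
      exact Submodule.add_mem_sup (hmem v)
        (Submodule.smul_mem _ _ (Submodule.mem_span_singleton_self ρ))

lemma IsNC.rlen_eq [Fintype W] (hE : IsEuler M E) (h : IsNC cs E g X) :
    rlen cs g = Module.finrank ℝ X := by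
  apply le_antisymm
  · induction hn : Module.finrank ℝ X generalizing g X with
    | zero =>
      rw [Submodule.finrank_eq_zero] at hn
      subst hn
      rw [h.eq_one hE, rlen_one]
    | succ n ih =>
      have hX : X ≠ ⊥ := by rintro rfl; simp at hn
      obtain ⟨ρ, hρX, hρ⟩ := h.exists_root hE hX
      obtain ⟨t, htr, ht⟩ := hρ.exists_reflection
      have hfr := finrank_cut hE hρX hρ.form_self
      have h1 := ih (h.cut hE hρX ht hρ.form_self) (by omega)
      have h2 := rlen_mul_le cs t (t * g)
      have h3 := rlen_prod_le cs [t] (by simpa using htr)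
      rw [List.prod_singleton, List.length_singleton] at h3
      rw [← mul_assoc, htr.mul_self, one_mul] at h2
      omega
  · obtain ⟨l, hl, hll, rfl⟩ := rlen_spec cs g
    obtain ⟨U, hU, hmem⟩ := exists_moved_space l hl
    rw [← hll]
    refine le_trans (Submodule.finrank_mono ?_) hU
    rw [h.eq_range]
    rintro _ ⟨v, rfl⟩
    simpa using hmem v

lemma IsNC.rle_of_le [Fintype W] (hE : IsEuler M E) (hx : IsNC cs E x X) (hz : IsNC cs E z Z)
    (hXZ : X ≤ Z) : rle cs x z := by
  induction hn : Module.finrank ℝ X generalizing x z X Z with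
  | zero =>
    rw [Submodule.finrank_eq_zero] at hn
    subst hn
    rw [hx.eq_one hE]
    simp [rle, rlen_one]
  | succ n ih =>
    have hX : X ≠ ⊥ := by rintro rfl; simp at hn
    obtain ⟨ρ, hρX, hρ⟩ := hx.exists_root hE hX
    obtain ⟨t, htr, ht⟩ := hρ.exists_reflection
    have hfx := finrank_cut hE hρX hρ.form_self
    have hfz := finrank_cut hE (hXZ hρX) hρ.form_self
    have cx := hx.cut hE hρX ht hρ.form_self
    have cz := hz.cut hE (hXZ hρX) ht hρ.form_self
    have h1 := ih cx cz (inf_le_inf_right _ hXZ) (by omega)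
    unfold rle at h1 ⊢
    have e : (t * x)⁻¹ * (t * z) = x⁻¹ * z := by group
    rw [e, cx.rlen_eq hE, cz.rlen_eq hE] at h1
    rw [hx.rlen_eq hE, hz.rlen_eq hE]
    omega

lemma IsNC.exists_of_prod [Fintype W] (hE : IsEuler M E) (l : List W)
    (hl : ∀ t ∈ l, cs.IsReflection t) (hz : IsNC cs E (l.prod * x) Z)
    (hlen : rlen cs (l.prod * x) = l.length + rlen cs x) : ∃ X ≤ Z, IsNC cs E x X := by
  induction l generalizing Z with
  | nil => exact ⟨Z, le_rfl, by simpa using hz⟩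
  | cons t l ih =>
    have htr : cs.IsReflection t := hl t (by simp)
    have hl' : ∀ t ∈ l, cs.IsReflection t := fun t ht => hl t (List.mem_cons_of_mem _ ht)
    obtain ⟨ρ, hρ, ht⟩ := exists_root_of_isReflection htr
    rw [List.prod_cons, mul_assoc] at hz hlen
    set y := l.prod * x with hy
    have hylen : rlen cs y ≤ l.length + rlen cs x :=
      (rlen_mul_le cs _ _).trans (Nat.add_le_add_right (rlen_prod_le cs l hl') _)
    -- by a dimension count, `im (1 - t y)` is all of `im (1 - y) + ℝ ρ`
    have hρZ : ρ ∈ Z := by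
      obtain ⟨m, hm, hml, hmy⟩ := rlen_spec cs y
      obtain ⟨U, hU, hmem⟩ := exists_moved_space m hm
      rw [hmy] at hmem
      have hle : Z ≤ U ⊔ Submodule.span ℝ {ρ} := by
        rw [hz.eq_range]
        rintro _ ⟨v, rfl⟩
        have : (1 - rep cs (t * y)) v =
            (v - rep cs y v) + (2 * form M (rep cs y v) ρ) • ρ := by
          rw [LinearMap.sub_apply, rep_mul_apply, ht, Module.End.one_apply]; module
        rw [this]
        exact Submodule.add_mem_sup (hmem v)
          (Submodule.smul_mem _ _ (Submodule.mem_span_singleton_self ρ))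
      have h1 := Submodule.finrank_add_le_finrank_add_finrank U (Submodule.span ℝ {ρ})
      have h2 := finrank_span_le_card (R := ℝ) ({ρ} : Set (B → ℝ))
      rw [Set.toFinset_singleton, Finset.card_singleton] at h2
      have h3 := hz.rlen_eq hE
      rw [List.length_cons] at hlen
      have h4 : Z = U ⊔ Submodule.span ℝ {ρ} :=
        Submodule.eq_of_le_of_finrank_le hle (by omega)
      rw [h4]
      exact Submodule.mem_sup_right (Submodule.mem_span_singleton_self ρ)
    have cz := hz.cut hE hρZ ht hρ.form_self
    have hfz := finrank_cut hE hρZ hρ.form_self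
    have h1 := hz.rlen_eq hE
    have h2 := cz.rlen_eq hE
    rw [← mul_assoc, htr.mul_self, one_mul] at cz h2
    rw [List.length_cons] at hlen
    obtain ⟨X, hXZ, hX⟩ := ih hl' cz (by omega)
    exact ⟨X, hXZ.trans inf_le_left, hX⟩

lemma IsNC.exists_of_rle [Fintype W] (hE : IsEuler M E) (hz : IsNC cs E z Z)
    (h : rle cs x z) : ∃ X ≤ Z, IsNC cs E x X := by
  obtain ⟨l, hl, hll, hprod⟩ := rlen_spec cs (z * x⁻¹)
  have e1 : z * x⁻¹ = x * (x⁻¹ * z) * x⁻¹ := by group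
  have e2 : l.prod * x = z := by rw [hprod]; group
  rw [e1, rlen_conj] at hll
  refine IsNC.exists_of_prod hE l hl (by rwa [e2]) ?_
  unfold rle at h
  rw [e2]
  omega

/-! ### Meets in the noncrossing partition lattice -/

/-- The Euler form adapted to a word containing every letter once. -/
noncomputable def eulerForm (M : CoxeterMatrix B) (L : List B) :
    LinearMap.BilinForm ℝ (B → ℝ) :=
  Matrix.toBilin' (Matrix.of fun i j => if L.idxOf i < L.idxOf j then 0
    else if i = j then 1 else 2 * form M (sroot i) (sroot j))

lemma eulerForm_sroot (L : List B) (i j : B) : eulerForm M L (sroot i) (sroot j) =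
    if L.idxOf i < L.idxOf j then 0
    else if i = j then 1 else 2 * form M (sroot i) (sroot j) := by
  simp [eulerForm, sroot, Matrix.toBilin'_single]

lemma adapted_eulerForm {L : List B} (hL : L.Nodup) (hall : ∀ i, i ∈ L) :
    Adapted M (eulerForm M L) L := by
  refine ⟨?_, hL, ?_⟩
  · have h : eulerForm M L + (eulerForm M L).flip = (2 : ℝ) • form M := by
      refine LinearMap.BilinForm.ext_basis (Pi.basisFun ℝ B) fun i j => ?_
      have e : ∀ i, (Pi.basisFun ℝ B) i = sroot i := fun i => by simp [sroot]
      rw [e, e]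
      change eulerForm M L (sroot i) (sroot j) + eulerForm M L (sroot j) (sroot i) =
        2 * form M (sroot i) (sroot j)
      rw [eulerForm_sroot, eulerForm_sroot]
      by_cases hij : i = j
      · subst hij
        simp [form_sroot_self]; norm_num
      · have hne : L.idxOf i ≠ L.idxOf j := fun h => hij ((List.idxOf_inj (hall i)).1 h)
        rcases lt_or_gt_of_ne hne with h | h
        · rw [if_pos h, if_neg h.not_gt, if_neg (Ne.symm hij), zero_add, form_comm]
        · rw [if_neg h.not_gt, if_neg hij, if_pos h, add_zero]
    intro x y
    have := congrArg (fun F : LinearMap.BilinForm ℝ (B → ℝ) => F x y) h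
    simpa using this
  · rw [List.pairwise_iff_getElem]
    intro i j hi hj hij
    rw [eulerForm_sroot, if_pos]
    rwa [hL.idxOf_getElem, hL.idxOf_getElem]

/-- Any two elements below the product of an adapted word have a meet: a generic point of the cone
spanned by the positive roots common to both subspaces determines it. -/
lemma exists_meet_word [Fintype W] {L : List B} (hL : L.Nodup) (hall : ∀ i, i ∈ L)
    (hx : rle cs x (cs.wordProd L)) (hz : rle cs z (cs.wordProd L)) :
    ∃ y, rle cs y x ∧ rle cs y z ∧ ∀ a, rle cs a x → rle cs a z → rle cs a y := by
  have hA := adapted_eulerForm (M := M) hL hall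
  have hE := hA.euler
  set E := eulerForm M L
  obtain ⟨X, hXL, hX⟩ := (hA.isNC (cs := cs)).exists_of_rle hE hx
  obtain ⟨Z, hZL, hZ⟩ := (hA.isNC (cs := cs)).exists_of_rle hE hz
  let S : Finset (B → ℝ) := ((finite_roots (cs := cs)).subset
    (fun ρ hρ => hρ.1 : posRoots cs (X ⊓ Z) ⊆ {ρ | IsRoot cs ρ})).toFinset
  have hS : (S : Set (B → ℝ)) = posRoots cs (X ⊓ Z) := Set.Finite.coe_toFinset _
  have hH : {U : Submodule ℝ (B → ℝ) | ∃ g, IsNC cs E g U}.Finite := by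
    refine (Set.finite_range fun g : W => LinearMap.range (1 - rep cs g)).subset ?_
    rintro U ⟨g, hg⟩
    exact ⟨g, hg.eq_range.symm⟩
  obtain ⟨P, hP, hgen⟩ := exists_generic S _ hH
  rw [hS] at hP hgen
  obtain ⟨Y, y, hY, hYX, hYZ, hPY⟩ := meetAt hA hX hZ hXL hZL
    (cone_mono inf_le_left hP) (cone_mono inf_le_right hP)
  have hSY := hgen Y ⟨y, hY⟩ hPY
  refine ⟨y, hY.rle_of_le hE hX hYX, hY.rle_of_le hE hZ hYZ, fun a hax haz => ?_⟩
  obtain ⟨A, hAX, hA⟩ := hX.exists_of_rle hE hax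
  obtain ⟨A', hAZ, hA'⟩ := hZ.exists_of_rle hE haz
  rw [hA'.eq_range, ← hA.eq_range] at hAZ
  refine hA.rle_of_le hE hY ((hA.le_span_roots hE).trans (Submodule.span_le.2 ?_))
  rintro ρ ⟨hρ, hρA⟩
  rcases hρ.nonneg_or_nonpos with h | h
  · exact hSY ⟨hρ, h, hAX hρA, hAZ hρA⟩
  · have := hSY ⟨hρ.neg, neg_nonneg.2 h, (X ⊓ Z).neg_mem ⟨hAX hρA, hAZ hρA⟩⟩
    simpa using this

theorem exists_meet [Fintype W] {γ : W} (hγ : IsCoxeterElement cs γ)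
    (hx : rle cs x γ) (hz : rle cs z γ) :
    ∃ y, rle cs y x ∧ rle cs y z ∧ ∀ a, rle cs a x → rle cs a z → rle cs a y := by
  obtain ⟨v, L, hL, hall, rfl⟩ := hγ
  have e : ∀ w : W, v⁻¹ * (v * w * v⁻¹) * v⁻¹⁻¹ = w := fun w => by group
  have e' : ∀ w : W, v * (v⁻¹ * w * v⁻¹⁻¹) * v⁻¹ = w := fun w => by group
  have hx' := rle_conj cs v⁻¹ hx
  have hz' := rle_conj cs v⁻¹ hz
  rw [e] at hx' hz'
  obtain ⟨y, hyx, hyz, hy⟩ := exists_meet_word hL hall hx' hz'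
  refine ⟨v * y * v⁻¹, ?_, ?_, fun a hax haz => ?_⟩
  · have := rle_conj cs v hyx; rwa [e'] at this
  · have := rle_conj cs v hyz; rwa [e'] at this
  · have := rle_conj cs v (hy _ (rle_conj cs v⁻¹ hax) (rle_conj cs v⁻¹ haz))
    rwa [e'] at this

/-- Dividing joins by a common element `u`. -/
lemma inv_mul_isIntervalLUB [Fintype W] {γ u v w p r s : W} (hγ : IsCoxeterElement cs γ)
    (hp : IsIntervalLUB cs γ {u, v} p) (hr : IsIntervalLUB cs γ {u, w} r)
    (hs : IsIntervalLUB cs γ {u, v, w} s) :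
    IsIntervalLUB cs γ {u⁻¹ * p, u⁻¹ * r} (u⁻¹ * s) := by
  have hup : rle cs u p := hp.2.1 u (by simp)
  have hvp : rle cs v p := hp.2.1 v (by simp)
  have hur : rle cs u r := hr.2.1 u (by simp)
  have hwr : rle cs w r := hr.2.1 w (by simp)
  have hus : rle cs u s := hs.2.1 u (by simp)
  have hvs : rle cs v s := hs.2.1 v (by simp)
  have hws : rle cs w s := hs.2.1 w (by simp)
  have hps : rle cs p s := hp.2.2 s hs.1 (by simp [hus, hvs])
  have hrs : rle cs r s := hr.2.2 s hs.1 (by simp [hus, hws])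
  have hsγ : rle cs (u⁻¹ * s) γ := rle_trans (inv_mul_rle hus) hs.1
  refine ⟨hsγ, ?_, fun x hxγ hx => ?_⟩
  · simp [rle_inv_mul hup hps, rle_inv_mul hur hrs]
  · obtain ⟨y, hyx, hys, hy⟩ := exists_meet hγ hxγ hsγ
    have hpy := hy _ (hx (u⁻¹ * p) (by simp)) (rle_inv_mul hup hps)
    have hry := hy _ (hx (u⁻¹ * r) (by simp)) (rle_inv_mul hur hrs)
    obtain ⟨huy, huys⟩ := rle_mul hus hys
    have hp' := rle_mul_of_inv_mul_rle hup huy hpy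
    have hr' := rle_mul_of_inv_mul_rle hur huy hry
    have hsy : rle cs s (u * y) := hs.2.2 _ (rle_trans huys hs.1)
      (by simp [huy, rle_trans hvp hp', rle_trans hwr hr'])
    have hys' : y = u⁻¹ * s := by rw [← rle_antisymm huys hsy]; group
    rwa [← hys']

end Order

end NCLattice

/-- Brady's Lemma 3.11: compatibility of joins with the group structure in `[1,γ]`. -/
theorem joins_compatible [Fintype B] [Fintype W] (cs : CoxeterSystem M W) (γ : W)
    (hγ : IsCoxeterElement cs γ) (u v w : W)
    (hu : rle cs u γ) (hv : rle cs v γ) (hw : rle cs w γ)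
    (p q r s : W) (a b c d e f g h i : W)
    (hp : IsIntervalLUB cs γ {u, v} p) (hq : IsIntervalLUB cs γ {v, w} q)
    (hr : IsIntervalLUB cs γ {u, w} r) (hs : IsIntervalLUB cs γ {u, v, w} s)
    (hua : u * a = p) (hvb : v * b = p)
    (hvc : v * c = q) (hwd : w * d = q)
    (hue : u * e = r) (hwf : w * f = r)
    (hpg : p * g = s) (hqh : q * h = s) (hri : r * i = s) :
    (a * g = e * i ∧ IsIntervalLUB cs γ {a, e} (a * g)) ∧
    (b * g = c * h ∧ IsIntervalLUB cs γ {b, c} (b * g)) ∧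
    (d * h = f * i ∧ IsIntervalLUB cs γ {d, f} (d * h)) := by
  classical
  have ea : a = u⁻¹ * p := eq_inv_mul_of_mul_eq hua
  have eb : b = v⁻¹ * p := eq_inv_mul_of_mul_eq hvb
  have ec : c = v⁻¹ * q := eq_inv_mul_of_mul_eq hvc
  have ed : d = w⁻¹ * q := eq_inv_mul_of_mul_eq hwd
  have ee : e = u⁻¹ * r := eq_inv_mul_of_mul_eq hue
  have ef : f = w⁻¹ * r := eq_inv_mul_of_mul_eq hwf
  have e1 : a * g = u⁻¹ * s := by rw [ea, mul_assoc, hpg]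
  have e2 : e * i = u⁻¹ * s := by rw [ee, mul_assoc, hri]
  have e3 : b * g = v⁻¹ * s := by rw [eb, mul_assoc, hpg]
  have e4 : c * h = v⁻¹ * s := by rw [ec, mul_assoc, hqh]
  have e5 : d * h = w⁻¹ * s := by rw [ed, mul_assoc, hqh]
  have e6 : f * i = w⁻¹ * s := by rw [ef, mul_assoc, hri]
  have hs2 : IsIntervalLUB cs γ {v, u, w} s := by rwa [Set.insert_comm]
  have hs3 : IsIntervalLUB cs γ {w, v, u} s := by
    rwa [Set.pair_comm v u, Set.insert_comm, Set.pair_comm w v]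
  rw [e1, e2, e3, e4, e5, e6, ea, eb, ec, ed, ee, ef]
  refine ⟨⟨rfl, ?_⟩, ⟨rfl, ?_⟩, ⟨rfl, ?_⟩⟩
  · exact NCLattice.inv_mul_isIntervalLUB hγ hp hr hs
  · exact NCLattice.inv_mul_isIntervalLUB hγ (Set.pair_comm u v ▸ hp) hq hs2
  · exact NCLattice.inv_mul_isIntervalLUB hγ (Set.pair_comm v w ▸ hq)
      (Set.pair_comm u w ▸ hr) hs3
end

section
/- Let v, b, c, g, h ∈ [1,γ] with v ≤ vb, v ≤ vc, and vb, vc, vbg ∈ [1,γ], and suppose bg = ch and bg is a least upper bound of {b,c} in ([1,γ],≤). If m ∈ [1,γ] is a least upper bound of {vb, vc} in ([1,γ],≤), then m = vbg = vch. -/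
/-!
The argument uses only that the reflection length `ℓ` is subadditive, invariant under conjugation
(because the set of reflections is), and vanishes only at `1`.

Write `m = v * x`. Since `v ≤ v * b ≤ m`, cancelling `v` gives `b ≤ x`, and likewise `c ≤ x`;
moreover `x ≤ m ≤ γ`, as a right factor of a length-additive factorization is, after conjugating
the other factor, also a left factor. Hence `b * g ≤ x`. Then `ℓ m = ℓ v + ℓ (b * g) +
ℓ ((b * g)⁻¹ * x)` is additive, which forces `v ≤ v * b * g ≤ m`. Additivity of
`ℓ (v * b * g) = ℓ v + ℓ (b * g)` also makes `v * b * g = v * c * h` an upper bound of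
`{v * b, v * c}`, so `m ≤ v * b * g`, and antisymmetry concludes.
-/

variable {B : Type*} {W : Type*} [Group W] {M : CoxeterMatrix B}

/-- The infimum defining `rlen` is attained: the set is nonempty because the simple reflections
generate `W`. -/
theorem rlen_spec (cs : CoxeterSystem M W) (w : W) :
    ∃ l : List W, (∀ t ∈ l, cs.IsReflection t) ∧ l.length = rlen cs w ∧ l.prod = w := by
  have hne : {k | ∃ l : List W, (∀ t ∈ l, cs.IsReflection t) ∧ l.length = k ∧
      l.prod = w}.Nonempty := by
    obtain ⟨ω, hω⟩ := cs.wordProd_surjective w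
    refine ⟨_, ω.map cs.simple, ?_, rfl, hω⟩
    intro t ht
    obtain ⟨i, -, rfl⟩ := List.mem_map.1 ht
    exact cs.isReflection_simple i
  exact Nat.sInf_mem hne

theorem rlen_le (cs : CoxeterSystem M W) {l : List W} (hl : ∀ t ∈ l, cs.IsReflection t) :
    rlen cs l.prod ≤ l.length :=
  Nat.sInf_le ⟨l, hl, rfl, rfl⟩

theorem rlen_mul_le (cs : CoxeterSystem M W) (u w : W) :
    rlen cs (u * w) ≤ rlen cs u + rlen cs w := by
  obtain ⟨l, hl, hlen, hprod⟩ := rlen_spec cs u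
  obtain ⟨l', hl', hlen', hprod'⟩ := rlen_spec cs w
  have h := rlen_le cs (l := l ++ l') (by
    intro t ht
    rcases List.mem_append.1 ht with ht | ht
    · exact hl t ht
    · exact hl' t ht)
  rwa [List.prod_append, List.length_append, hprod, hprod', hlen, hlen'] at h

theorem rlen_conj_le (cs : CoxeterSystem M W) (u w : W) :
    rlen cs (u * w * u⁻¹) ≤ rlen cs w := by
  obtain ⟨l, hl, hlen, hprod⟩ := rlen_spec cs w
  have h := rlen_le cs (l := l.map (MulAut.conj u)) (by
    intro t ht
    obtain ⟨s, hs, rfl⟩ := List.mem_map.1 ht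
    exact (hl s hs).conj u)
  rwa [← map_list_prod, List.length_map, hprod, hlen, MulAut.conj_apply] at h

theorem eq_one_of_rlen_eq_zero (cs : CoxeterSystem M W) {w : W} (h : rlen cs w = 0) : w = 1 := by
  obtain ⟨l, -, hlen, hprod⟩ := rlen_spec cs w
  rw [h, List.length_eq_zero_iff] at hlen
  rw [← hprod, hlen, List.prod_nil]

/-- Only one inequality has to be checked for `u ≤ u * w`; the other is subadditivity. -/
theorem rle_mul_iff (cs : CoxeterSystem M W) (u w : W) :
    rle cs u (u * w) ↔ rlen cs u + rlen cs w ≤ rlen cs (u * w) := by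
  have := rlen_mul_le cs u w
  rw [rle, inv_mul_cancel_left]
  omega

theorem rle_trans (cs : CoxeterSystem M W) {u w z : W} (h₁ : rle cs u w) (h₂ : rle cs w z) :
    rle cs u z := by
  have h₃ := rlen_mul_le cs (u⁻¹ * w) (w⁻¹ * z)
  have h₄ := rlen_mul_le cs u (u⁻¹ * z)
  rw [show u⁻¹ * w * (w⁻¹ * z) = u⁻¹ * z by group] at h₃
  rw [mul_inv_cancel_left] at h₄
  unfold rle at *
  omega

theorem rle_antisymm (cs : CoxeterSystem M W) {u w : W} (h₁ : rle cs u w) (h₂ : rle cs w u) :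
    u = w := by
  unfold rle at *
  exact inv_mul_eq_one.1 (eq_one_of_rlen_eq_zero cs (w := u⁻¹ * w) (by omega))

/-- In a length-additive factorization `v * x`, the right factor is also below the product, since
`v * x = x * (x⁻¹ * v * x)`. -/
theorem rle_right (cs : CoxeterSystem M W) {v x : W} (h : rle cs v (v * x)) :
    rle cs x (v * x) := by
  rw [rle_mul_iff] at h
  have hconj := rlen_conj_le cs x⁻¹ v
  rw [inv_inv] at hconj
  have e : v * x = x * (x⁻¹ * v * x) := by group
  rw [e] at h ⊢
  rw [rle_mul_iff]
  omega

/-- Left cancellation of `v` in `v ≤ v * b ≤ v * x`. -/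
theorem rle_cancel (cs : CoxeterSystem M W) {v b x : W} (h₁ : rle cs v (v * b))
    (h₂ : rle cs (v * b) (v * x)) : rle cs b x := by
  have h₃ := rlen_mul_le cs v x
  have h₄ := rlen_mul_le cs b (b⁻¹ * x)
  rw [mul_inv_cancel_left] at h₄
  unfold rle at *
  rw [show (v * b)⁻¹ * (v * x) = b⁻¹ * x by group] at h₂
  rw [inv_mul_cancel_left] at h₁
  omega

/-- If `v * x` is length-additive and `y ≤ x`, then `v * y` is length-additive and below `v * x`. -/
theorem rle_translate (cs : CoxeterSystem M W) {v x y : W} (h₁ : rle cs v (v * x))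
    (h₂ : rle cs y x) : rle cs v (v * y) ∧ rle cs (v * y) (v * x) := by
  have h₃ := rlen_mul_le cs v y
  have h₄ := rlen_mul_le cs (v * y) (y⁻¹ * x)
  rw [show v * y * (y⁻¹ * x) = v * x by group] at h₄
  unfold rle at *
  rw [show (v * y)⁻¹ * (v * x) = y⁻¹ * x by group]
  rw [inv_mul_cancel_left] at h₁ ⊢
  omega

/-- Brady's Lemma 4.3 (distributivity): if `b ∨ c = bg = ch` then
`vb ∨ vc = vbg = vch`. -/
theorem join_translate [Fintype B] [Fintype W] (cs : CoxeterSystem M W) (γ : W)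
    (hγ : IsCoxeterElement cs γ) (v b c g h : W)
    (hv : rle cs v γ) (hb : rle cs b γ) (hc : rle cs c γ)
    (hg : rle cs g γ) (hh : rle cs h γ)
    (hvb : rle cs v (v * b)) (hvc : rle cs v (v * c))
    (hvbI : rle cs (v * b) γ) (hvcI : rle cs (v * c) γ) (hvbgI : rle cs (v * b * g) γ)
    (hbg : b * g = c * h) (hjoin : IsIntervalLUB cs γ {b, c} (b * g))
    (m : W) (hm : IsIntervalLUB cs γ {v * b, v * c} m) :
    m = v * b * g ∧ m = v * c * h := by
  obtain ⟨hmγ, hmub, hmleast⟩ := hm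
  obtain ⟨-, hjub, hjleast⟩ := hjoin
  have hvbm : rle cs (v * b) m := hmub _ (by simp)
  have hvcm : rle cs (v * c) m := hmub _ (by simp)
  obtain ⟨x, rfl⟩ : ∃ x, m = v * x := ⟨v⁻¹ * m, by group⟩
  have hvx : rle cs v (v * x) := rle_trans cs hvb hvbm
  have hxγ : rle cs x γ := rle_trans cs (rle_right cs hvx) hmγ
  have hjx : rle cs (b * g) x := by
    refine hjleast x hxγ ?_
    rintro y (rfl | rfl)
    · exact rle_cancel cs hvb hvbm
    · exact rle_cancel cs hvc hvcm
  obtain ⟨hvj, hjm⟩ := rle_translate cs hvx hjx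
  have hmj : rle cs (v * x) (v * (b * g)) := by
    refine hmleast _ (rle_trans cs hjm hmγ) ?_
    rintro y (rfl | rfl)
    · exact (rle_translate cs hvj (hjub b (by simp))).2
    · exact (rle_translate cs hvj (hjub c (by simp))).2
  have key : v * x = v * (b * g) := rle_antisymm cs hmj hjm
  exact ⟨by rw [key, mul_assoc], by rw [key, hbg, mul_assoc]⟩
end
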